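/- arXiv:2210.07662 — 8 statements merged into one kernel-verified Lean document; each statement's English description precedes it below -/
import Mathlib

section
/- For every bi-invariant symmetric bilinear form Q on g with Q|_{k×k} = 0, the map H_Q is a well-defined alternating 3-form on p which is ad(k)-invariant and closed (dH_Q = 0); moreover, for all X,Y,Z ∈ p one has H_Q(X,Y,Z) = 4·Q([X,Y],Z) − Q([X,Y]_p,Z) + Q([X,Z]_p,Y) − Q([Y,Z]_p,X). -/
/-!
Write `H_Q = σ + c` with `σ(X,Y,Z) = Q([X,Y],Z)`, which is totally skew by bi-invariance of `Q`, and
`c(X,Y,Z)` the cyclic sum of `Q([X,Y]_k,Z)`. Skewness and the alternative formula then only use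
`[X,Y] = [X,Y]_k + [X,Y]_p`, and `ad(k)`-invariance holds because the projection to `k` commutes
with `ad(k)`.

For closedness, let `A = [X₁,X₂]`. Since `[A_k,X₃]` lies in `p`, one has `[A_p,X₃]_k = [A,X₃]_k`;
together with `Q|_{k×k} = 0` this gives, for `B = [X₃,X₄]`,
`H_Q(A_p,X₃,X₄) = Q(A,B) + Q([A,X₃]_k,X₄) - Q([A,X₄]_k,X₃) + (Q(B_k,A) - Q(A_k,B))`.
In the signed sum over all pairs the last bracket cancels against that of the complementary pair,
and the remaining terms vanish by the Jacobi identity.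
-/

/-- Let `g` be semisimple with negative-definite Killing form, `k ⊆ g` a
subalgebra, `g_b` a bi-invariant inner product, `p` the `g_b`-orthogonal complement of `k`,
with projections `prk`, `prp` onto `k` and `p`.  For every bi-invariant symmetric bilinear
form `Q` on `g` with `Q|_{k×k} = 0`, the map
`H_Q(X,Y,Z) = Q([X,Y],Z) + Q([X,Y]_k,Z) - Q([X,Z]_k,Y) + Q([Y,Z]_k,X)`
is an alternating, `ad(k)`-invariant and closed 3-form on `p`, and on `p` it equals
`4Q([X,Y],Z) - Q([X,Y]_p,Z) + Q([X,Z]_p,Y) - Q([Y,Z]_p,X)`. -/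
theorem stmt_3
    {L : Type} [LieRing L] [LieAlgebra ℝ L] [FiniteDimensional ℝ L]
    (hκneg : ∀ X : L, X ≠ 0 → killingForm ℝ L X X < 0)
    (k : LieSubalgebra ℝ L)
    (gb : LinearMap.BilinForm ℝ L)
    (hgb_symm : ∀ X Y : L, gb X Y = gb Y X)
    (hgb_pos : ∀ X : L, X ≠ 0 → 0 < gb X X)
    (hgb_inv : ∀ X Y Z : L, gb ⁅X, Y⁆ Z = - gb Y ⁅X, Z⁆)
    (p : Submodule ℝ L)
    (hp : ∀ X : L, X ∈ p ↔ ∀ Z ∈ k, gb X Z = 0)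
    (hkp : ∀ Z ∈ k, ∀ X ∈ p, ⁅Z, X⁆ ∈ p)
    (prk prp : L →ₗ[ℝ] L)
    (hprk : ∀ X : L, prk X ∈ k) (hprp : ∀ X : L, prp X ∈ p)
    (hprsum : ∀ X : L, prk X + prp X = X)
    (hprkk : ∀ Z ∈ k, prk Z = Z) (hprpp : ∀ X ∈ p, prp X = X)
    (Q : LinearMap.BilinForm ℝ L)
    (hQsymm : ∀ X Y : L, Q X Y = Q Y X)
    (hQinv : ∀ X Y Z : L, Q ⁅X, Y⁆ Z = - Q Y ⁅X, Z⁆)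
    (hQk : ∀ Z ∈ k, ∀ W ∈ k, Q Z W = 0)
    (HQ : L → L → L → ℝ)
    (hHQ : ∀ X Y Z : L, HQ X Y Z
      = Q ⁅X, Y⁆ Z + Q (prk ⁅X, Y⁆) Z - Q (prk ⁅X, Z⁆) Y + Q (prk ⁅Y, Z⁆) X) :
    -- H_Q is alternating on p
    (∀ X ∈ p, ∀ Y ∈ p, ∀ Z ∈ p,
      HQ X Y Z = - HQ Y X Z ∧ HQ X Y Z = - HQ X Z Y)
    ∧
    -- H_Q is ad(k)-invariant
    (∀ Z ∈ k, ∀ X ∈ p, ∀ Y ∈ p, ∀ W ∈ p,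
      HQ ⁅Z, X⁆ Y W + HQ X ⁅Z, Y⁆ W + HQ X Y ⁅Z, W⁆ = 0)
    ∧
    -- H_Q is closed: dH_Q = 0
    (∀ X₁ ∈ p, ∀ X₂ ∈ p, ∀ X₃ ∈ p, ∀ X₄ ∈ p,
      - HQ (prp ⁅X₁, X₂⁆) X₃ X₄ + HQ (prp ⁅X₁, X₃⁆) X₂ X₄ - HQ (prp ⁅X₁, X₄⁆) X₂ X₃
        - HQ (prp ⁅X₂, X₃⁆) X₁ X₄ + HQ (prp ⁅X₂, X₄⁆) X₁ X₃ - HQ (prp ⁅X₃, X₄⁆) X₁ X₂ = 0)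
    ∧
    -- the alternative formula for H_Q on p
    (∀ X ∈ p, ∀ Y ∈ p, ∀ Z ∈ p,
      HQ X Y Z
        = 4 * Q ⁅X, Y⁆ Z - Q (prp ⁅X, Y⁆) Z + Q (prp ⁅X, Z⁆) Y - Q (prp ⁅Y, Z⁆) X) := by
  have hpk : ∀ X ∈ p, prk X = 0 := by
    intro X hX
    have h := hprsum X
    rwa [hprpp X hX, add_eq_right] at h
  have hP : ∀ X, prp X = X - prk X := fun X => eq_sub_of_add_eq' (hprsum X)
  -- the projection to `k` commutes with `ad(k)`
  have hequiv : ∀ Z ∈ k, ∀ W : L, prk ⁅Z, W⁆ = ⁅Z, prk W⁆ := by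
    intro Z hZ W
    conv_lhs => rw [← hprsum W, lie_add, map_add]
    rw [hpk _ (hkp Z hZ _ (hprp W)), add_zero, hprkk _ (k.lie_mem hZ (hprk W))]
  have hass : ∀ X Y Z : L, Q ⁅X, Y⁆ Z = Q X ⁅Y, Z⁆ := by
    intro X Y Z
    rw [← lie_skew, map_neg, LinearMap.neg_apply, hQinv, neg_neg]
  have hskew : ∀ X Y Z : L, Q ⁅X, Y⁆ Z = - Q ⁅Y, X⁆ Z := by
    intro X Y Z
    rw [← lie_skew, map_neg, LinearMap.neg_apply]
  have hkskew : ∀ X Y Z : L, Q (prk ⁅X, Y⁆) Z = - Q (prk ⁅Y, X⁆) Z := by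
    intro X Y Z
    rw [← lie_skew, map_neg, map_neg, LinearMap.neg_apply]
  have hskew' : ∀ X Y Z : L, Q ⁅X, Y⁆ Z = - Q ⁅X, Z⁆ Y := by
    intro X Y Z
    rw [hQinv, hQsymm]
  refine ⟨?_, ?_, ?_, ?_⟩
  · intro X _ Y _ Z _
    simp only [hHQ]
    constructor
    · linarith [hskew X Y Z, hkskew X Y Z]
    · linarith [hskew' X Y Z, hkskew Y Z X]
  · intro Z hZ X _ Y _ W _
    simp only [hHQ]
    -- `ad(Z)`-invariance of each summand `Q (prk ⁅A, B⁆) C`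
    have hk : ∀ A B C : L, Q (prk ⁅⁅Z, A⁆, B⁆) C + Q (prk ⁅A, ⁅Z, B⁆⁆) C
        + Q (prk ⁅A, B⁆) ⁅Z, C⁆ = 0 := by
      intro A B C
      have h := hQinv Z (prk ⁅A, B⁆) C
      rw [← hequiv Z hZ, leibniz_lie, map_add, map_add, LinearMap.add_apply] at h
      linarith
    have hs : Q ⁅⁅Z, X⁆, Y⁆ W + Q ⁅X, ⁅Z, Y⁆⁆ W + Q ⁅X, Y⁆ ⁅Z, W⁆ = 0 := by
      have h := hQinv Z ⁅X, Y⁆ W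
      rw [leibniz_lie, map_add, LinearMap.add_apply] at h
      linarith
    linarith [hk X Y W, hk X W Y, hk Y W X]
  · intro X₁ h₁ X₂ h₂ X₃ h₃ X₄ h₄
    have key : ∀ A : L, ∀ Y ∈ p, ∀ Z ∈ p, HQ (prp A) Y Z = Q A ⁅Y, Z⁆ + Q (prk ⁅A, Y⁆) Z
        - Q (prk ⁅A, Z⁆) Y + (Q (prk ⁅Y, Z⁆) A - Q (prk A) ⁅Y, Z⁆) := by
      intro A Y hY Z hZ
      have hb : ∀ W ∈ p, prk ⁅prp A, W⁆ = prk ⁅A, W⁆ := by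
        intro W hW
        rw [hP, sub_lie, map_sub, hpk _ (hkp _ (hprk A) W hW), sub_zero]
      rw [hHQ, hb Y hY, hb Z hZ, hass, hP, map_sub, map_sub, LinearMap.sub_apply,
        hQk _ (hprk _) _ (hprk _)]
      ring
    rw [key _ _ h₃ _ h₄, key _ _ h₂ _ h₄, key _ _ h₂ _ h₃, key _ _ h₁ _ h₄, key _ _ h₁ _ h₃,
      key _ _ h₁ _ h₂]
    have hjac : ∀ A B C : L, ⁅⁅A, B⁆, C⁆ - ⁅⁅A, C⁆, B⁆ + ⁅⁅B, C⁆, A⁆ = 0 := by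
      intro A B C
      rw [← lie_skew ⁅A, C⁆ B, ← lie_skew ⁅B, C⁆ A, lie_lie]
      abel
    have hkjac : ∀ A B C D : L, Q (prk ⁅⁅A, B⁆, C⁆) D - Q (prk ⁅⁅A, C⁆, B⁆) D
        + Q (prk ⁅⁅B, C⁆, A⁆) D = 0 := by
      intro A B C D
      rw [← LinearMap.sub_apply, ← LinearMap.add_apply, ← map_sub, ← map_add, ← map_sub,
        ← map_add, hjac, map_zero, map_zero, LinearMap.zero_apply]
    have hsjac : Q ⁅X₁, X₂⁆ ⁅X₃, X₄⁆ - Q ⁅X₁, X₃⁆ ⁅X₂, X₄⁆ + Q ⁅X₂, X₃⁆ ⁅X₁, X₄⁆ = 0 := by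
      rw [← hass, ← hass, ← hass, ← LinearMap.sub_apply, ← LinearMap.add_apply, ← map_sub,
        ← map_add, hjac, map_zero, LinearMap.zero_apply]
    linarith [hkjac X₁ X₂ X₃ X₄, hkjac X₁ X₂ X₄ X₃, hkjac X₁ X₃ X₄ X₂, hkjac X₂ X₃ X₄ X₁,
      hQsymm ⁅X₁, X₂⁆ ⁅X₃, X₄⁆, hQsymm ⁅X₁, X₃⁆ ⁅X₂, X₄⁆, hQsymm ⁅X₂, X₃⁆ ⁅X₁, X₄⁆]
  · intro X _ Y _ Z _
    simp only [hHQ, hP, map_sub, LinearMap.sub_apply]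
    linarith [hskew' X Y Z, hass Y Z X, hskew' Y Z X, hskew X Y Z]
end

section
/- For every bi-invariant symmetric bilinear form Q on g with Q|_{k×k} = 0, the alternating 3-form Q̄ + d̂α_Q on g satisfies (Q̄ + d̂α_Q)(Z, ·, ·) = 0 for every Z ∈ k, and its restriction to p×p×p equals H_Q. -/
/-!
Write `X_k` for the `k`-component of `X`. Since `Q` vanishes on `k × k`, the 2-form is
`α_Q(A, B) = Q(A, B_k) - Q(A_k, B)` for all `A, B`. On `p` the `k`-components of the arguments
vanish, so `α_Q([X,Y], Z) = -Q([X,Y]_k, Z)` and the formula for `H_Q` drops out. For `Z ∈ k`, the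
projection to `k` commutes with `ad Z` because `[k,k] ⊆ k` and `[k,p] ⊆ p`; invariance of `Q` then
makes all terms of `(Q̄ + d̂α_Q)(Z, X, Y)` cancel in pairs.
-/

/-- Setup as in Statement 3, with `α_Q` the alternating 2-form on `g`
vanishing on `k×k` and `p×p` and equal to `Q` on `p×k`.  Then the 3-form `Q̄ + d̂α_Q`
(where `Q̄(X,Y,Z) = Q([X,Y],Z)` and `d̂` is the Chevalley–Eilenberg differential) satisfies
`(Q̄ + d̂α_Q)(Z,·,·) = 0` for every `Z ∈ k`, and its restriction to `p×p×p` equals `H_Q`. -/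
theorem stmt_4
    {L : Type} [LieRing L] [LieAlgebra ℝ L] [FiniteDimensional ℝ L]
    (hκneg : ∀ X : L, X ≠ 0 → killingForm ℝ L X X < 0)
    (k : LieSubalgebra ℝ L)
    (gb : LinearMap.BilinForm ℝ L)
    (hgb_symm : ∀ X Y : L, gb X Y = gb Y X)
    (hgb_pos : ∀ X : L, X ≠ 0 → 0 < gb X X)
    (hgb_inv : ∀ X Y Z : L, gb ⁅X, Y⁆ Z = - gb Y ⁅X, Z⁆)
    (p : Submodule ℝ L)
    (hp : ∀ X : L, X ∈ p ↔ ∀ Z ∈ k, gb X Z = 0)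
    (hkp : ∀ Z ∈ k, ∀ X ∈ p, ⁅Z, X⁆ ∈ p)
    (prk prp : L →ₗ[ℝ] L)
    (hprk : ∀ X : L, prk X ∈ k) (hprp : ∀ X : L, prp X ∈ p)
    (hprsum : ∀ X : L, prk X + prp X = X)
    (hprkk : ∀ Z ∈ k, prk Z = Z) (hprpp : ∀ X ∈ p, prp X = X)
    (Q : LinearMap.BilinForm ℝ L)
    (hQsymm : ∀ X Y : L, Q X Y = Q Y X)
    (hQinv : ∀ X Y Z : L, Q ⁅X, Y⁆ Z = - Q Y ⁅X, Z⁆)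
    (hQk : ∀ Z ∈ k, ∀ W ∈ k, Q Z W = 0)
    (HQ : L → L → L → ℝ)
    (hHQ : ∀ X Y Z : L, HQ X Y Z
      = Q ⁅X, Y⁆ Z + Q (prk ⁅X, Y⁆) Z - Q (prk ⁅X, Z⁆) Y + Q (prk ⁅Y, Z⁆) X)
    (αQ : LinearMap.BilinForm ℝ L)
    (hαalt : ∀ X : L, αQ X X = 0)
    (hαkk : ∀ Z ∈ k, ∀ W ∈ k, αQ Z W = 0)
    (hαpp : ∀ X ∈ p, ∀ Y ∈ p, αQ X Y = 0)
    (hαpk : ∀ X ∈ p, ∀ Z ∈ k, αQ X Z = Q X Z)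
    (T : L → L → L → ℝ)
    (hT : ∀ X Y Z : L, T X Y Z
      = Q ⁅X, Y⁆ Z + (- αQ ⁅X, Y⁆ Z + αQ ⁅X, Z⁆ Y - αQ ⁅Y, Z⁆ X)) :
    -- (Q̄ + d̂α_Q)(Z, ·, ·) = 0 for all Z ∈ k
    (∀ Z ∈ k, ∀ X Y : L, T Z X Y = 0)
    ∧
    -- the restriction of Q̄ + d̂α_Q to p×p×p is H_Q
    (∀ X ∈ p, ∀ Y ∈ p, ∀ Z ∈ p, T X Y Z = HQ X Y Z) := by
  have hprk0 : ∀ X ∈ p, prk X = 0 := fun X hX => by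
    have h := hprsum X
    rwa [hprpp X hX, add_eq_right] at h
  have hskew : ∀ A B : L, αQ A B = - αQ B A := fun A B => by
    have h := hαalt (A + B)
    simp only [map_add, LinearMap.add_apply, hαalt] at h
    linarith
  have hα : ∀ A B : L, αQ A B = Q A (prk B) - Q (prk A) B := fun A B => by
    have hA := hprsum A
    have hB := hprsum B
    have e1 : αQ A B = αQ (prk A + prp A) (prk B + prp B) := by rw [hA, hB]
    have e2 : Q A (prk B) = Q (prk A + prp A) (prk B) := by rw [hA]
    have e3 : Q (prk A) B = Q (prk A) (prk B + prp B) := by rw [hB]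
    rw [e1, e2, e3]
    simp only [map_add, LinearMap.add_apply]
    rw [hαkk _ (hprk A) _ (hprk B), hαpp _ (hprp A) _ (hprp B), hskew (prk A) (prp B),
      hαpk _ (hprp B) _ (hprk A), hαpk _ (hprp A) _ (hprk B), hQk _ (hprk A) _ (hprk B),
      hQsymm (prp B) (prk A)]
    ring
  have hprk_lie : ∀ Z ∈ k, ∀ X : L, prk ⁅Z, X⁆ = ⁅Z, prk X⁆ := fun Z hZ X => by
    have e : ⁅Z, X⁆ = ⁅Z, prk X⁆ + ⁅Z, prp X⁆ := by rw [← lie_add, hprsum]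
    rw [e, map_add, hprkk _ (k.lie_mem hZ (hprk X)), hprk0 _ (hkp Z hZ _ (hprp X)), add_zero]
  refine ⟨fun Z hZ X Y => ?_, fun X hX Y hY Z hZ => ?_⟩
  · have h1 : Q ⁅Z, Y⁆ (prk X) = - Q ⁅Z, prk X⁆ Y := by rw [hQinv, hQsymm]
    have h2 : Q ⁅Z, prk Y⁆ X = - Q ⁅Z, X⁆ (prk Y) := by rw [hQinv, hQsymm]
    have h3 : Q ⁅X, Y⁆ Z = Q ⁅Z, X⁆ Y := by
      rw [hQinv, ← lie_skew, map_neg, neg_neg, hQsymm]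
    have h4 : Q (prk ⁅X, Y⁆) Z = 0 := hQk _ (hprk _) _ hZ
    rw [hT]
    simp only [hα, hprk_lie Z hZ, hprkk Z hZ]
    linarith
  · rw [hT, hHQ]
    simp only [hα, hprk0 X hX, hprk0 Y hY, hprk0 Z hZ, map_zero]
    ring
end

section
/- Let H be an ad(k)-invariant alternating 3-form on p and let Ĥ be the alternating 3-form on g defined by Ĥ(X,Y,Z) := H(X_p, Y_p, Z_p), where X_p denotes the p-component of X. Suppose Ĥ = Q̄ + d̂α for some bi-invariant symmetric bilinear form Q on g and some ad(k)-invariant alternating 2-form α on g, where Q̄(X,Y,Z) := Q([X,Y],Z). Then: (1) Q(X,Z) = α(X,Z) for all X ∈ g and Z ∈ k; (2) Q|_{k×k} = 0; and (3) H = H_Q + dβ, where β := α|_{p×p} is an ad(k)-invariant alternating 2-form on p. -/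
/-!
For `Z ∈ k` the form `Ĥ(·, ·, Z)` vanishes, and `ad(k)`-invariance of `α` cancels two of the three
terms of `d̂α(X, Y, Z)`; what remains is `Q([X,Y], Z) = α([X,Y], Z)`. Since `g` is perfect
(`eq_zero_of_vanish_on_lie`), this gives (1). On `k × k` the form `Q = α` is both symmetric and
alternating, hence zero, which is (2). For (3), split every bracket in `d̂α` into its `k`- and
`p`-components and turn the `k`-components of `α` into `Q` by (1).
-/

/-- Perfectness of a Lie algebra with negative definite Killing form, in dual form: a functional
that vanishes on brackets is zero. It is represented as `κ(W, ·)`; by invariance of `κ` the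
element `W` is central, so `κ(W, W) = 0` and `W = 0`. -/
lemma eq_zero_of_vanish_on_lie {L : Type} [LieRing L] [LieAlgebra ℝ L] [FiniteDimensional ℝ L]
    (hκneg : ∀ X : L, X ≠ 0 → killingForm ℝ L X X < 0)
    (f : L →ₗ[ℝ] ℝ) (hf : ∀ X Y : L, f ⁅X, Y⁆ = 0) : f = 0 := by
  have hinj : Function.Injective (killingForm ℝ L) := by
    rw [injective_iff_map_eq_zero]
    intro W hW
    by_contra hne
    have := hκneg W hne
    simp [hW] at this
  have hsurj : Function.Surjective (killingForm ℝ L) :=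
    (LinearMap.injective_iff_surjective_of_finrank_eq_finrank
      (Subspace.dual_finrank_eq (K := ℝ) (V := L)).symm).1 hinj
  obtain ⟨W, rfl⟩ := hsurj f
  have hcentral : ∀ X : L, ⁅W, X⁆ = 0 := fun X => hinj <| by
    ext Y
    have h := LieModule.traceForm_apply_lie_apply ℝ L L W X Y
    simpa [h] using hf X Y
  have had : LieAlgebra.ad ℝ L W = 0 := by
    ext X
    simp [hcentral X]
  have hW : W = 0 := by
    by_contra hne
    have := hκneg W hne
    simp [killingForm_apply_apply, had] at this
  simp [hW]

/-- Setup as in Statement 3.  Let `H` be an `ad(k)`-invariant alternating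
3-form on `p` and let `Ĥ(X,Y,Z) := H(X_p, Y_p, Z_p)`.  Suppose `Ĥ = Q̄ + d̂α` for some
bi-invariant symmetric bilinear form `Q` on `g` and some `ad(k)`-invariant alternating
2-form `α` on `g`.  Then (1) `Q(X,Z) = α(X,Z)` for all `X ∈ g`, `Z ∈ k`; (2) `Q|_{k×k} = 0`;
(3) `H = H_Q + dβ` where `β = α|_{p×p}` is an `ad(k)`-invariant alternating 2-form on `p`. -/
theorem stmt_5
    {L : Type} [LieRing L] [LieAlgebra ℝ L] [FiniteDimensional ℝ L]
    (hκneg : ∀ X : L, X ≠ 0 → killingForm ℝ L X X < 0)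
    (k : LieSubalgebra ℝ L)
    (gb : LinearMap.BilinForm ℝ L)
    (hgb_symm : ∀ X Y : L, gb X Y = gb Y X)
    (hgb_pos : ∀ X : L, X ≠ 0 → 0 < gb X X)
    (hgb_inv : ∀ X Y Z : L, gb ⁅X, Y⁆ Z = - gb Y ⁅X, Z⁆)
    (p : Submodule ℝ L)
    (hp : ∀ X : L, X ∈ p ↔ ∀ Z ∈ k, gb X Z = 0)
    (hkp : ∀ Z ∈ k, ∀ X ∈ p, ⁅Z, X⁆ ∈ p)
    (prk prp : L →ₗ[ℝ] L)
    (hprk : ∀ X : L, prk X ∈ k) (hprp : ∀ X : L, prp X ∈ p)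
    (hprsum : ∀ X : L, prk X + prp X = X)
    (hprkk : ∀ Z ∈ k, prk Z = Z) (hprpp : ∀ X ∈ p, prp X = X)
    -- H : an ad(k)-invariant alternating 3-form on p
    (H : (↥p) [⋀^Fin 3]→ₗ[ℝ] ℝ)
    (hHinv : ∀ Z (hZ : Z ∈ k), ∀ X Y W : ↥p,
      H ![⟨⁅Z, (X : L)⁆, hkp Z hZ X X.2⟩, Y, W]
        + H ![X, ⟨⁅Z, (Y : L)⁆, hkp Z hZ Y Y.2⟩, W]
        + H ![X, Y, ⟨⁅Z, (W : L)⁆, hkp Z hZ W W.2⟩] = 0)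
    -- Ĥ(X,Y,Z) = H(X_p, Y_p, Z_p)
    (Hhat : L → L → L → ℝ)
    (hHhat : ∀ X Y Z : L, Hhat X Y Z
      = H ![⟨prp X, hprp X⟩, ⟨prp Y, hprp Y⟩, ⟨prp Z, hprp Z⟩])
    -- Q : a bi-invariant symmetric bilinear form on g
    (Q : LinearMap.BilinForm ℝ L)
    (hQsymm : ∀ X Y : L, Q X Y = Q Y X)
    (hQinv : ∀ X Y Z : L, Q ⁅X, Y⁆ Z = - Q Y ⁅X, Z⁆)
    -- α : an ad(k)-invariant alternating 2-form on g
    (α : LinearMap.BilinForm ℝ L)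
    (hαalt : ∀ X : L, α X X = 0)
    (hαinv : ∀ Z ∈ k, ∀ X Y : L, α ⁅Z, X⁆ Y + α X ⁅Z, Y⁆ = 0)
    -- hypothesis: Ĥ = Q̄ + d̂α
    (heq : ∀ X Y Z : L, Hhat X Y Z
      = Q ⁅X, Y⁆ Z + (- α ⁅X, Y⁆ Z + α ⁅X, Z⁆ Y - α ⁅Y, Z⁆ X)) :
    -- (1) Q(X,Z) = α(X,Z) for all X ∈ g, Z ∈ k
    (∀ X : L, ∀ Z ∈ k, Q X Z = α X Z)
    ∧
    -- (2) Q|_{k×k} = 0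
    (∀ Z ∈ k, ∀ W ∈ k, Q Z W = 0)
    ∧
    -- (3a) β := α|_{p×p} is ad(k)-invariant
    (∀ Z ∈ k, ∀ X Y : ↥p, α ⁅Z, (X : L)⁆ (Y : L) + α (X : L) ⁅Z, (Y : L)⁆ = 0)
    ∧
    -- (3b) H = H_Q + dβ on p
    (∀ X Y Z : ↥p,
      H ![X, Y, Z]
        = (Q ⁅(X : L), (Y : L)⁆ (Z : L)
            + Q (prk ⁅(X : L), (Y : L)⁆) (Z : L)
            - Q (prk ⁅(X : L), (Z : L)⁆) (Y : L)
            + Q (prk ⁅(Y : L), (Z : L)⁆) (X : L))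
          + (- α (prp ⁅(X : L), (Y : L)⁆) (Z : L)
            + α (prp ⁅(X : L), (Z : L)⁆) (Y : L)
            - α (prp ⁅(Y : L), (Z : L)⁆) (X : L))) := by
  have hαskew : ∀ X Y : L, α X Y = - α Y X := fun X Y => by
    have h := hαalt (X + Y)
    simp only [map_add, LinearMap.add_apply, hαalt] at h
    linarith
  have hprpk : ∀ Z ∈ k, prp Z = 0 := fun Z hZ => by
    have h := hprsum Z
    rw [hprkk Z hZ] at h
    simpa using h
  have hbracket : ∀ Z ∈ k, ∀ X Y : L, Q ⁅X, Y⁆ Z = α ⁅X, Y⁆ Z := fun Z hZ X Y => by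
    have hzero : Hhat X Y Z = 0 := by
      rw [hHhat]
      exact H.map_coord_zero 2 (Subtype.ext (hprpk Z hZ))
    have h := heq X Y Z
    have hinv := hαinv Z hZ X Y
    have hX : α ⁅X, Z⁆ Y = - α ⁅Z, X⁆ Y := by
      rw [← lie_skew Z X, map_neg, LinearMap.neg_apply, neg_neg]
    have hY : α ⁅Y, Z⁆ X = α X ⁅Z, Y⁆ := by
      rw [hαskew, ← lie_skew Z Y, map_neg]
    linarith
  have h1 : ∀ X : L, ∀ Z ∈ k, Q X Z = α X Z := fun X Z hZ => by
    have hf := eq_zero_of_vanish_on_lie hκneg (Q.flip Z - α.flip Z) fun X Y => by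
      simp [hbracket Z hZ X Y]
    have h := LinearMap.congr_fun hf X
    simp only [LinearMap.sub_apply, LinearMap.BilinForm.flip_apply, LinearMap.zero_apply] at h
    linarith
  refine ⟨h1, fun Z hZ W hW => ?_, fun Z hZ X Y => hαinv Z hZ X Y, fun X Y Z => ?_⟩
  · linarith [h1 Z W hW, h1 W Z hZ, hQsymm Z W, hαskew Z W]
  · have hH : H ![X, Y, Z] = Hhat X Y Z := by
      rw [hHhat]
      congr 1
      simp [hprpp]
    have hsplit : ∀ U V : L, α U V = - Q (prk U) V + α (prp U) V := fun U V => by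
      rw [hQsymm, h1 V _ (hprk U), ← hαskew, ← LinearMap.add_apply, ← map_add, hprsum]
    rw [hH, heq, hsplit ⁅(X : L), (Y : L)⁆, hsplit ⁅(X : L), (Z : L)⁆, hsplit ⁅(Y : L), (Z : L)⁆]
    ring
end

section
/- For y_1,…,y_s ∈ ℝ, the bi-invariant symmetric bilinear form Q := y_1·κ_{g_1} + … + y_s·κ_{g_s} on g (i.e. Q(X,Y) = Σ_i y_i·κ_{g_i}(X_i,Y_i)) satisfies Q|_{k×k} = 0 if and only if Σ_{i : π_i(k_j) ≠ 0} y_i/c_{ij} = 0 for every j = 1,…,t. -/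
/-!
Write `κ` for the Killing form of `L`. Since each `K i` is an ideal, its Killing form is the
restriction of `κ` (`killingForm_subalgebra_of_ideal`), so
`Q X Y = ∑ i, y i * κ (π i X) (π i Y)`; and each `π i` respects brackets
(`projection_map_lie`), so `Q` is an invariant bilinear form.

* Distinct simple ideals of `k` are `Q`-orthogonal: they commute, `Q` is invariant, and a linear
  functional on a simple Lie algebra that kills all brackets is zero
  (`linear_functional_eq_zero`).
* If `π i` is not zero on the simple algebra `kj j`, it maps it isomorphically onto `P i j`
  (`killingForm_of_simple_image`), so `κ_{kj j}(W, W') = c_{ij} κ_{K i}(π i W, π i W')`. Hence on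
  `kj j` the form `Q` is `(∑ y_i / c_{ij}) κ_{kj j}`.
* The same identity, the positivity of `c_{ij}` and the negative definiteness of `κ` show that
  `κ_{kj j}(W, W) ≠ 0` for `W ≠ 0`.

So `Q` vanishes on `k` exactly when all the scalars `∑ y_i / c_{ij}` vanish.
-/

/-- A simple Lie algebra is perfect, expressed dually: the kernel of `f` is an ideal containing all
brackets. -/
lemma linear_functional_eq_zero {S : Type*} [LieRing S] [LieAlgebra ℝ S]
    (hS : LieAlgebra.IsSimple ℝ S) (f : S →ₗ[ℝ] ℝ) (hf : ∀ a b : S, f ⁅a, b⁆ = 0) (x : S) :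
    f x = 0 := by
  let I : LieIdeal ℝ S :=
    { LinearMap.ker f with lie_mem := fun {a b} _ => hf a b }
  have hI : ∀ z, z ∈ I ↔ f z = 0 := fun z => Iff.rfl
  rcases hS.eq_bot_or_eq_top I with h | h
  · refine absurd ⟨fun a b => ?_⟩ hS.non_abelian
    have : ⁅a, b⁆ ∈ I := hf a b
    simpa [h] using this
  · exact (hI x).1 (h ▸ LieSubmodule.mem_top x)

lemma killingForm_subalgebra_of_ideal {L : Type*} [LieRing L] [LieAlgebra ℝ L]
    [FiniteDimensional ℝ L] (K : LieSubalgebra ℝ L)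
    (hK : ∀ X Y : L, Y ∈ K → ⁅X, Y⁆ ∈ K) (U V : K) :
    killingForm ℝ K U V = killingForm ℝ L U V := by
  let I : LieIdeal ℝ L := { K.toSubmodule with lie_mem := fun {a b} h => hK a b h }
  let e : K ≃ₗ⁅ℝ⁆ I :=
    { toFun := fun x => ⟨x.1, x.2⟩
      invFun := fun x => ⟨x.1, x.2⟩
      map_add' := fun _ _ => rfl
      map_smul' := fun _ _ => rfl
      map_lie' := rfl
      left_inv := fun _ => rfl
      right_inv := fun _ => rfl }
  rw [← LieAlgebra.killingForm_of_equiv_apply e U V, LieIdeal.killingForm_eq]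
  rfl

lemma projection_map_lie {L : Type*} [LieRing L] [LieAlgebra ℝ L]
    {s : ℕ} (K : Fin s → LieSubalgebra ℝ L)
    (hKideal : ∀ (i : Fin s) (X Y : L), Y ∈ K i → ⁅X, Y⁆ ∈ K i)
    (π : Fin s → (L →ₗ[ℝ] L))
    (hπmem : ∀ i X, π i X ∈ K i)
    (hπsum : ∀ X : L, ∑ i, π i X = X)
    (hπid : ∀ i X, X ∈ K i → π i X = X)
    (hπzero : ∀ i j, i ≠ j → ∀ X, X ∈ K i → π j X = 0) (i : Fin s) (X Y : L) :
    π i ⁅X, Y⁆ = ⁅π i X, π i Y⁆ := by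
  have h1 : π i ⁅X, Y⁆ = ⁅X, π i Y⁆ := by
    conv_lhs => rw [← hπsum Y, lie_sum, map_sum]
    rw [Finset.sum_eq_single i]
    · exact hπid i _ (hKideal i _ _ (hπmem i Y))
    · intro b _ hb
      exact hπzero b i hb _ (hKideal b _ _ (hπmem b Y))
    · simp
  rw [h1]
  conv_lhs => rw [← hπsum X, sum_lie]
  rw [Finset.sum_eq_single i]
  · intro a _ ha
    -- the bracket lies in `K a ∩ K i`, which is zero
    have hi : ⁅π a X, π i Y⁆ ∈ K i := hKideal i _ _ (hπmem i Y)
    have ha' : ⁅π a X, π i Y⁆ ∈ K a := by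
      rw [← lie_skew]
      exact neg_mem (hKideal a _ _ (hπmem a X))
    rw [← hπid i _ hi]
    exact hπzero a i ha _ ha'
  · simp

/-- A bracket-preserving map that is nonzero on a simple subalgebra is injective there, hence
carries its Killing form to that of the image. -/
lemma killingForm_of_simple_image {L : Type*} [LieRing L] [LieAlgebra ℝ L]
    (p : L →ₗ[ℝ] L) (hp : ∀ X Y, p ⁅X, Y⁆ = ⁅p X, p Y⁆)
    (S P : LieSubalgebra ℝ L) (hS : LieAlgebra.IsSimple ℝ S)
    (hP : (P : Set L) = p '' (S : Set L)) (hne : ∃ W ∈ S, p W ≠ 0) (W W' : S)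
    (hW : p W ∈ P) (hW' : p W' ∈ P) :
    killingForm ℝ P ⟨p W, hW⟩ ⟨p W', hW'⟩ = killingForm ℝ S W W' := by
  have hmem : ∀ x : S, p x ∈ P := fun x => by
    have : p x ∈ (P : Set L) := hP ▸ ⟨x, x.2, rfl⟩
    exact this
  let f : S →ₗ⁅ℝ⁆ P :=
    { toFun := fun x => ⟨p x, hmem x⟩
      map_add' := fun x y => Subtype.ext (by simp)
      map_smul' := fun c x => Subtype.ext (by simp)
      map_lie' := fun {x y} => Subtype.ext (by simp [hp]) }
  have hf : ∀ x, ((f x : P) : L) = p x := fun x => rfl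
  have hinj : Function.Injective f := by
    rw [← LieHom.ker_eq_bot]
    refine (hS.eq_bot_or_eq_top f.ker).resolve_right fun h => ?_
    obtain ⟨V, hV, hV0⟩ := hne
    have : (⟨V, hV⟩ : S) ∈ f.ker := h ▸ LieSubmodule.mem_top _
    rw [LieHom.mem_ker] at this
    exact hV0 (by simpa [hf] using congrArg (Subtype.val) this)
  have hsurj : Function.Surjective f := by
    rintro ⟨z, hz⟩
    have : z ∈ (P : Set L) := hz
    rw [hP] at this
    obtain ⟨w, hw, rfl⟩ := this
    exact ⟨⟨w, hw⟩, rfl⟩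
  exact LieAlgebra.killingForm_of_equiv_apply (LieEquiv.ofBijective f ⟨hinj, hsurj⟩) W W'

open scoped BigOperators Classical

/-- Let `g = g_1 ⊕ … ⊕ g_s` be semisimple with negative-definite Killing
form (simple ideals `K i`, projections `π i`) and let `k = k_1 ⊕ … ⊕ k_t ⊆ g` be a
semisimple subalgebra with simple ideals `kj j`.  For each pair `(i,j)` with
`π_i(k_j) ≠ 0` let `c_{ij} > 0` be the constant with
`κ_{π_i(k_j)} = c_{ij} · κ_{g_i}|_{π_i(k_j) × π_i(k_j)}`.  Then the bi-invariant form
`Q = y_1 κ_{g_1} + … + y_s κ_{g_s}` satisfies `Q|_{k×k} = 0` if and only if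
`Σ_{i : π_i(k_j) ≠ 0} y_i / c_{ij} = 0` for every `j`. -/
theorem stmt_6
    {L : Type} [LieRing L] [LieAlgebra ℝ L] [FiniteDimensional ℝ L]
    [LieAlgebra.IsSemisimple ℝ L]
    (hκneg : ∀ X : L, X ≠ 0 → killingForm ℝ L X X < 0)
    {s : ℕ} (K : Fin s → LieSubalgebra ℝ L)
    (hKideal : ∀ (i : Fin s) (X Y : L), Y ∈ K i → ⁅X, Y⁆ ∈ K i)
    (hKsimple : ∀ i, LieAlgebra.IsSimple ℝ ↥(K i))
    (π : Fin s → (L →ₗ[ℝ] L))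
    (hπmem : ∀ i X, π i X ∈ K i)
    (hπsum : ∀ X : L, ∑ i, π i X = X)
    (hπid : ∀ i X, X ∈ K i → π i X = X)
    (hπzero : ∀ i j, i ≠ j → ∀ X, X ∈ K i → π j X = 0)
    -- k is a semisimple subalgebra with simple ideals k_1, …, k_t
    (k : LieSubalgebra ℝ L)
    {t : ℕ} (kj : Fin t → LieSubalgebra ℝ L)
    (hkjsub : ∀ j, (kj j : Set L) ⊆ (k : Set L))
    (hkjideal : ∀ (j : Fin t) (Z W : L), Z ∈ k → W ∈ kj j → ⁅Z, W⁆ ∈ kj j)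
    (hkjsimple : ∀ j, LieAlgebra.IsSimple ℝ ↥(kj j))
    (hkdecomp : ∀ Z ∈ k, ∃ f : Fin t → L, (∀ j, f j ∈ kj j) ∧ Z = ∑ j, f j)
    (hkindep : ∀ f : Fin t → L, (∀ j, f j ∈ kj j) → (∑ j, f j) = 0 → ∀ j, f j = 0)
    -- the subalgebras π_i(k_j) and the Killing constants c_{ij}
    (P : Fin s → Fin t → LieSubalgebra ℝ L)
    (hPset : ∀ i j, (P i j : Set L) = (π i) '' (kj j : Set L))
    (hPK : ∀ i j (U : L), U ∈ P i j → U ∈ K i)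
    (cij : Fin s → Fin t → ℝ)
    (hcijpos : ∀ i j, (∃ W ∈ kj j, π i W ≠ 0) → 0 < cij i j)
    (hcij : ∀ i j, (∃ W ∈ kj j, π i W ≠ 0) →
      ∀ U V : ↥(P i j),
        killingForm ℝ ↥(P i j) U V
          = cij i j * killingForm ℝ ↥(K i) ⟨(U : L), hPK i j U U.2⟩ ⟨(V : L), hPK i j V V.2⟩)
    -- Q = y_1 κ_{g_1} + … + y_s κ_{g_s}
    (y : Fin s → ℝ)
    (Q : L → L → ℝ)
    (hQ : ∀ X Y : L, Q X Y
      = ∑ i, y i * killingForm ℝ ↥(K i) ⟨π i X, hπmem i X⟩ ⟨π i Y, hπmem i Y⟩) :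
    (∀ Z ∈ k, ∀ W ∈ k, Q Z W = 0)
      ↔ (∀ j : Fin t,
          ∑ i : Fin s, (if ∃ W ∈ kj j, π i W ≠ 0 then y i / cij i j else 0) = 0) := by
  have hπlie := projection_map_lie K hKideal π hπmem hπsum hπid hπzero
  let B : LinearMap.BilinForm ℝ L :=
    ∑ i, y i • (killingForm ℝ L).compl₁₂ (π i) (π i)
  have hBapp : ∀ X Y, B X Y = ∑ i, y i * killingForm ℝ L (π i X) (π i Y) := fun X Y => by
    simp [B, LinearMap.sum_apply]
  have hQB : ∀ X Y, Q X Y = B X Y := fun X Y => by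
    rw [hQ, hBapp]
    refine Finset.sum_congr rfl fun i _ => ?_
    rw [killingForm_subalgebra_of_ideal (K i) (hKideal i)]
  have hBinv : ∀ X Y Z, B ⁅X, Y⁆ Z = B X ⁅Y, Z⁆ := fun X Y Z => by
    simp only [hBapp, hπlie]
    refine Finset.sum_congr rfl fun i _ => ?_
    rw [LieModule.traceForm_apply_lie_apply]
  have hcomm : ∀ j j', j ≠ j' → ∀ V ∈ kj j, ∀ W ∈ kj j', ⁅V, W⁆ = 0 := by
    intro j j' hjj V hV W hW
    have h1 : ⁅V, W⁆ ∈ kj j := by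
      rw [← lie_skew]
      exact neg_mem (hkjideal j W V (hkjsub j' hW) hV)
    have h2 : ⁅V, W⁆ ∈ kj j' := hkjideal j' V W (hkjsub j hV) hW
    -- independence applied to `⁅V, W⁆ - ⁅V, W⁆`, split over the two indices
    have := hkindep (Pi.single j ⁅V, W⁆ - Pi.single j' ⁅V, W⁆) (fun l => by
      refine sub_mem ?_ ?_
      · by_cases h : l = j
        · subst h; simpa using h1
        · simp [Pi.single_eq_of_ne h]
      · by_cases h : l = j'
        · subst h; simpa using h2
        · simp [Pi.single_eq_of_ne h]) (by simp) j
    simpa [Pi.single_eq_of_ne hjj] using this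
  have hcross : ∀ j j', j ≠ j' → ∀ V ∈ kj j, ∀ W ∈ kj j', B V W = 0 := by
    intro j j' hjj V hV W hW
    refine linear_functional_eq_zero (hkjsimple j)
      ((B.flip W).comp (kj j).toSubmodule.subtype) (fun a b => ?_) ⟨V, hV⟩
    change B ⁅(a : L), (b : L)⁆ W = 0
    rw [hBinv, hcomm j j' hjj b b.2 W hW, map_zero]
  have hkey : ∀ i j, (∃ W ∈ kj j, π i W ≠ 0) → ∀ V W : kj j,
      killingForm ℝ (kj j) V W = cij i j * killingForm ℝ L (π i V) (π i W) := by
    intro i j hne V W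
    have hm : ∀ x : kj j, π i x ∈ P i j := fun x => by
      have : π i x ∈ (P i j : Set L) := hPset i j ▸ ⟨x, x.2, rfl⟩
      exact this
    rw [← killingForm_of_simple_image (π i) (hπlie i) (kj j) (P i j) (hkjsimple j) (hPset i j)
      hne V W (hm V) (hm W), hcij i j hne, killingForm_subalgebra_of_ideal (K i) (hKideal i)]
  have hdiag : ∀ j, ∀ V W : kj j, B V W =
      (∑ i : Fin s, (if ∃ W ∈ kj j, π i W ≠ 0 then y i / cij i j else 0)) *
        killingForm ℝ (kj j) V W := by
    intro j V W
    rw [hBapp, Finset.sum_mul]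
    refine Finset.sum_congr rfl fun i _ => ?_
    split_ifs with hne
    · have := (hcijpos i j hne).ne'
      rw [hkey i j hne V W]
      field_simp
    · push Not at hne
      simp [hne V V.2]
  simp only [hQB]
  constructor
  · intro h j
    obtain ⟨V, hV⟩ : ∃ V : kj j, V ≠ 0 := by
      by_contra! h0
      exact (hkjsimple j).non_abelian ⟨fun a b => h0 _⟩
    obtain ⟨i, hi⟩ : ∃ i, π i V ≠ 0 := by
      by_contra! h0
      exact hV (Subtype.ext (by rw [← hπsum V]; simp [h0]))
    have hne : ∃ W ∈ kj j, π i W ≠ 0 := ⟨V, V.2, hi⟩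
    have h1 := hdiag j V V
    rw [h V (hkjsub j V.2) V (hkjsub j V.2)] at h1
    refine (mul_eq_zero.1 h1.symm).resolve_right ?_
    rw [hkey i j hne]
    exact mul_ne_zero (hcijpos i j hne).ne' (hκneg _ hi).ne
  · intro h Z hZ W hW
    obtain ⟨f, hf, rfl⟩ := hkdecomp Z hZ
    obtain ⟨g, hg, rfl⟩ := hkdecomp W hW
    simp only [map_sum, LinearMap.sum_apply]
    refine Finset.sum_eq_zero fun a _ => Finset.sum_eq_zero fun b _ => ?_
    by_cases hab : b = a
    · subst hab
      have := hdiag b ⟨f b, hf b⟩ ⟨g b, hg b⟩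
      rw [h b, zero_mul] at this
      exact this
    · exact hcross b a hab _ (hf b) _ (hg a)
end

section
/- The vector space V := {Q : Q is a bi-invariant symmetric bilinear form on g with Q|_{k×k} = 0} satisfies s − t − d_0(d_0+1)/2 ≤ dim V ≤ s. Moreover, dim V = s if and only if k = 0. -/
/-!
Write `P` for the negated Killing form, a positive definite invariant form on `g`. On a simple
algebra every invariant symmetric form `Q` is a multiple of `P`: diagonalising `Q` against `P`
gives a real `c` for which `Q - c P` is degenerate, and the radical of `Q - c P` is an ideal
(`exists_eq_smul_of_isSimple`). Since a simple algebra is perfect, distinct commuting simple ideals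
are orthogonal for every invariant form (`form_eq_zero_of_commute`). Hence
`c ↦ ∑ i, c i • P (π i ·) (π i ·)` (`sumForm`) identifies `ℝˢ` with the space of all
bi-invariant symmetric forms, and `V` with a subspace of `ℝˢ`. This gives `dim V ≤ s`; equality
forces the form with all `c i = 1`, which is positive definite, to vanish on `k`, so `k = 0`.

The same two facts applied to the simple ideals of `k` show that such a form vanishes on `k` as soon
as it vanishes at one nonzero vector of each simple ideal of `k` and at all pairs from a basis of
the center of `k`. These are `t + d₀ (d₀ + 1) / 2` linear conditions, which yields the lower bound.
-/

open scoped BigOperators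

/-- The space of bi-invariant symmetric bilinear forms `Q` on `g` with `Q|_{k×k} = 0`,
as a submodule of the space of bilinear forms on `g`. -/
noncomputable def biinvVanishingOn {L : Type} [LieRing L] [LieAlgebra ℝ L] (k : LieSubalgebra ℝ L) :
    Submodule ℝ (L →ₗ[ℝ] L →ₗ[ℝ] ℝ) where
  carrier := {Q | (∀ X Y : L, Q X Y = Q Y X)
    ∧ (∀ X Y Z : L, Q ⁅X, Y⁆ Z = - Q Y ⁅X, Z⁆)
    ∧ (∀ Z ∈ k, ∀ W ∈ k, Q Z W = 0)}
  add_mem' := by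
    rintro Q R ⟨hQ1, hQ2, hQ3⟩ ⟨hR1, hR2, hR3⟩
    refine ⟨fun X Y => ?_, fun X Y Z => ?_, fun Z hZ W hW => ?_⟩ <;>
      simp only [LinearMap.add_apply]
    · rw [hQ1, hR1]
    · rw [hQ2, hR2]; ring
    · rw [hQ3 Z hZ W hW, hR3 Z hZ W hW]; ring
  zero_mem' := by
    refine ⟨fun X Y => ?_, fun X Y Z => ?_, fun Z _ W _ => ?_⟩ <;>
      simp [LinearMap.zero_apply]
  smul_mem' := by
    rintro a Q ⟨hQ1, hQ2, hQ3⟩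
    refine ⟨fun X Y => ?_, fun X Y Z => ?_, fun Z hZ W hW => ?_⟩ <;>
      simp only [LinearMap.smul_apply, smul_eq_mul]
    · rw [hQ1]
    · rw [hQ2]; ring
    · rw [hQ3 Z hZ W hW]; ring

/-- Simultaneous diagonalisation, one eigenvector: a symmetric form has an eigenvector relative to
a positive definite one. -/
lemma exists_relative_eigenvector {V : Type*} [AddCommGroup V] [Module ℝ V]
    [FiniteDimensional ℝ V] [Nontrivial V] (P Q : V →ₗ[ℝ] V →ₗ[ℝ] ℝ)
    (hP : ∀ x y, P x y = P y x) (hPpos : ∀ x, x ≠ 0 → 0 < P x x)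
    (hQ : ∀ x y, Q x y = Q y x) :
    ∃ c : ℝ, ∃ v : V, v ≠ 0 ∧ ∀ w, Q v w = c * P v w := by
  have hnd : LinearMap.BilinForm.Nondegenerate P := by
    constructor
    · intro x hx
      by_contra h
      exact (hPpos x h).ne' (hx x)
    · intro x hx
      by_contra h
      exact (hPpos x h).ne' (hx x)
  let core : InnerProductSpace.Core ℝ V :=
    { inner := fun x y => P x y
      conj_inner_symm := fun x y => by simpa using hP y x
      re_inner_nonneg := fun x => by
        rcases eq_or_ne x 0 with rfl | h
        · simp
        · simpa using (hPpos x h).le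
      add_left := fun x y z => by simp
      smul_left := fun x y r => by simp
      definite := fun x hx => by
        by_contra h
        exact (hPpos x h).ne' hx }
  let : NormedAddCommGroup V := core.toNormedAddCommGroup
  let : InnerProductSpace ℝ V := InnerProductSpace.ofCore core.toCore
  let T : V →ₗ[ℝ] V := (LinearMap.BilinForm.toDual P hnd).symm.toLinearMap ∘ₗ Q
  have hT : ∀ v w, P (T v) w = Q v w := fun v w =>
    LinearMap.BilinForm.apply_toDual_symm_apply (hB := hnd) (Q v) w
  have hsym : T.IsSymmetric := by
    intro x y
    change P (T x) y = P x (T y)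
    rw [hT, hP x, hT, hQ]
  obtain ⟨v, hv⟩ := hsym.hasEigenvalue_iSup_of_finiteDimensional.exists_hasEigenvector
  generalize (RCLike.ofReal _ : ℝ) = c at hv
  refine ⟨c, v, hv.2, fun w => ?_⟩
  rw [← hT, hv.apply_eq_smul]
  simp

/-- On a simple Lie algebra with a positive definite invariant form `P`, every invariant symmetric
form is a multiple of `P`. -/
lemma exists_eq_smul_of_isSimple {H : Type*} [LieRing H] [LieAlgebra ℝ H] [FiniteDimensional ℝ H]
    [LieAlgebra.IsSimple ℝ H] (P Q : H →ₗ[ℝ] H →ₗ[ℝ] ℝ)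
    (hP : ∀ x y, P x y = P y x) (hPpos : ∀ x, x ≠ 0 → 0 < P x x)
    (hPinv : ∀ x y z : H, P ⁅x, y⁆ z = - P y ⁅x, z⁆)
    (hQ : ∀ x y, Q x y = Q y x) (hQinv : ∀ x y z : H, Q ⁅x, y⁆ z = - Q y ⁅x, z⁆) :
    ∃ c : ℝ, ∀ x y, Q x y = c * P x y := by
  have := LieAlgebra.IsSimple.nontrivial ℝ (L := H)
  obtain ⟨c, v, hv, h⟩ := exists_relative_eigenvector P Q hP hPpos hQ
  -- the radical of `Q - c P`
  let I : LieIdeal ℝ H :=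
    { LinearMap.ker (Q - c • P) with
      lie_mem := by
        intro x m hm
        replace hm : (Q - c • P) m = 0 := hm
        change (Q - c • P) ⁅x, m⁆ = 0
        ext z
        have := LinearMap.congr_fun hm ⁅x, z⁆
        simp only [LinearMap.sub_apply, LinearMap.smul_apply, smul_eq_mul,
          LinearMap.zero_apply, hPinv, hQinv] at this ⊢
        linarith }
  have hvI : v ∈ I := by
    change (Q - c • P) v = 0
    ext w
    simp [h]
  have hI : I = ⊤ := by
    refine (LieAlgebra.IsSimple.eq_bot_or_eq_top I).resolve_left fun hb => hv ?_
    rw [hb] at hvI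
    simpa using hvI
  refine ⟨c, fun x y => ?_⟩
  have hx : x ∈ I := hI ▸ LieSubmodule.mem_top x
  replace hx : (Q - c • P) x = 0 := hx
  have := LinearMap.congr_fun hx y
  simp only [LinearMap.sub_apply, LinearMap.smul_apply, smul_eq_mul, LinearMap.zero_apply] at this
  linarith

/-- A simple Lie algebra is perfect, phrased for linear functionals. -/
lemma eq_zero_of_isSimple {H : Type*} [LieRing H] [LieAlgebra ℝ H]
    [LieAlgebra.IsSimple ℝ H] (f : H →ₗ[ℝ] ℝ) (hf : ∀ x y : H, f ⁅x, y⁆ = 0) (x : H) : f x = 0 := by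
  let I : LieIdeal ℝ H :=
    { Submodule.span ℝ {z : H | ∃ x y : H, ⁅x, y⁆ = z} with
      lie_mem := by
        intro x m _
        exact Submodule.subset_span ⟨x, m, rfl⟩ }
  have hI : I = ⊤ := by
    refine (LieAlgebra.IsSimple.eq_bot_or_eq_top I).resolve_left fun hb => ?_
    refine LieAlgebra.IsSimple.non_abelian ℝ (L := H) ⟨fun a b => ?_⟩
    have : ⁅a, b⁆ ∈ I := Submodule.subset_span ⟨a, b, rfl⟩
    rw [hb] at this
    simpa using this
  have hx : x ∈ I := hI ▸ LieSubmodule.mem_top x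
  have hle : Submodule.span ℝ {z : H | ∃ x y : H, ⁅x, y⁆ = z} ≤ LinearMap.ker f := by
    rw [Submodule.span_le]
    rintro _ ⟨a, b, rfl⟩
    exact hf a b
  exact hle hx

/-- A simple subalgebra is orthogonal, for any form invariant under it, to everything it
centralises. -/
lemma form_eq_zero_of_commute {L : Type*} [LieRing L] [LieAlgebra ℝ L] (H : LieSubalgebra ℝ L)
    (hH : LieAlgebra.IsSimple ℝ ↥H) (Q : L →ₗ[ℝ] L →ₗ[ℝ] ℝ)
    (hQinv : ∀ x y z : L, Q ⁅x, y⁆ z = - Q y ⁅x, z⁆) (z : L) (hz : ∀ a ∈ H, ⁅a, z⁆ = 0)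
    (x : L) (hx : x ∈ H) : Q x z = 0 := by
  refine eq_zero_of_isSimple ((Q.flip z) ∘ₗ (H.incl : ↥H →ₗ[ℝ] L)) (fun a b => ?_) ⟨x, hx⟩
  change Q ⁅(a : L), (b : L)⁆ z = 0
  rw [hQinv, hz a a.2]
  simp

/-- `exists_eq_smul_of_isSimple` for the restrictions of ambient forms to a simple subalgebra. -/
lemma exists_eq_smul_on {L : Type*} [LieRing L] [LieAlgebra ℝ L] [FiniteDimensional ℝ L]
    (H : LieSubalgebra ℝ L) (hH : LieAlgebra.IsSimple ℝ ↥H) (P Q : L →ₗ[ℝ] L →ₗ[ℝ] ℝ)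
    (hP : ∀ x y, P x y = P y x) (hPpos : ∀ x, x ≠ 0 → 0 < P x x)
    (hPinv : ∀ x y z : L, P ⁅x, y⁆ z = - P y ⁅x, z⁆)
    (hQ : ∀ x y, Q x y = Q y x) (hQinv : ∀ x y z : L, Q ⁅x, y⁆ z = - Q y ⁅x, z⁆) :
    ∃ c : ℝ, ∀ x ∈ H, ∀ y ∈ H, Q x y = c * P x y := by
  obtain ⟨c, hc⟩ := exists_eq_smul_of_isSimple (H := ↥H)
    (P.compl₁₂ H.toSubmodule.subtype H.toSubmodule.subtype)
    (Q.compl₁₂ H.toSubmodule.subtype H.toSubmodule.subtype)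
    (fun x y => hP x y) (fun x hx => hPpos x (by simpa using hx)) (fun x y z => hPinv x y z)
    (fun x y => hQ x y) (fun x y z => hQinv x y z)
  exact ⟨c, fun x hx y hy => hc ⟨x, hx⟩ ⟨y, hy⟩⟩

lemma exists_ne_zero_mem_of_isSimple {L : Type*} [LieRing L] [LieAlgebra ℝ L]
    (H : LieSubalgebra ℝ L) (hH : LieAlgebra.IsSimple ℝ ↥H) : ∃ x ∈ H, x ≠ 0 := by
  have := LieAlgebra.IsSimple.nontrivial ℝ (L := ↥H)
  obtain ⟨x, hx⟩ := exists_ne (0 : ↥H)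
  exact ⟨x, x.2, by simpa using hx⟩

/-- The form `∑ i, c i • P (π i ·) (π i ·)`, linearly in the coefficients `c`. -/
noncomputable def sumForm {L : Type*} [AddCommGroup L] [Module ℝ L] {s : ℕ}
    (P : L →ₗ[ℝ] L →ₗ[ℝ] ℝ) (π : Fin s → (L →ₗ[ℝ] L)) :
    (Fin s → ℝ) →ₗ[ℝ] (L →ₗ[ℝ] L →ₗ[ℝ] ℝ) :=
  Fintype.linearCombination ℝ (fun i => P.compl₁₂ (π i) (π i))

lemma sumForm_apply {L : Type*} [AddCommGroup L] [Module ℝ L] {s : ℕ}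
    (P : L →ₗ[ℝ] L →ₗ[ℝ] ℝ) (π : Fin s → (L →ₗ[ℝ] L)) (c : Fin s → ℝ) (X Y : L) :
    sumForm P π c X Y = ∑ i, c i * P (π i X) (π i Y) := by
  simp [sumForm, Fintype.linearCombination_apply, LinearMap.sum_apply]

/-- The linear conditions cutting out the forms that vanish on a reductive subalgebra: a value at
one pair `(x j, x j)` per simple ideal and at one pair per unordered pair of basis vectors of the
center. Here `Quot.out` picks an ordering of each unordered pair. -/
noncomputable def testMap {L : Type*} [AddCommGroup L] [Module ℝ L] {s t d : ℕ}
    (Φ : (Fin s → ℝ) →ₗ[ℝ] (L →ₗ[ℝ] L →ₗ[ℝ] ℝ)) (x : Fin t → L) (b : Fin d → L) :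
    (Fin s → ℝ) →ₗ[ℝ] ((Fin t → ℝ) × (Sym2 (Fin d) → ℝ)) where
  toFun c := (fun j => Φ c (x j) (x j), fun p => Φ c (b (Quot.out p).1) (b (Quot.out p).2))
  map_add' c c' := by ext <;> simp
  map_smul' r c := by ext <;> simp

lemma finrank_test_target (t d : ℕ) :
    Module.finrank ℝ ((Fin t → ℝ) × (Sym2 (Fin d) → ℝ)) = t + d * (d + 1) / 2 := by
  rw [Module.finrank_prod, Module.finrank_fintype_fun_eq_card,
    Module.finrank_fintype_fun_eq_card, Sym2.card, Fintype.card_fin, Fintype.card_fin,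
    Nat.choose_two_right, Nat.add_sub_cancel, mul_comm]

/-- Let `g` be a real semisimple Lie algebra with negative-definite
Killing form having exactly `s` simple ideals, and let `k ⊆ g` be a subalgebra having
exactly `t` simple ideals and center of dimension `d₀`.  Then the vector space `V` of
bi-invariant symmetric bilinear forms on `g` vanishing on `k × k` satisfies
`s - t - d₀(d₀+1)/2 ≤ dim V ≤ s`, and `dim V = s` iff `k = 0`. -/
theorem stmt_7
    {L : Type} [LieRing L] [LieAlgebra ℝ L] [FiniteDimensional ℝ L]
    [LieAlgebra.IsSemisimple ℝ L]
    (hκneg : ∀ X : L, X ≠ 0 → killingForm ℝ L X X < 0)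
    -- the s simple ideals of g
    {s : ℕ} (K : Fin s → LieSubalgebra ℝ L)
    (hKideal : ∀ (i : Fin s) (X Y : L), Y ∈ K i → ⁅X, Y⁆ ∈ K i)
    (hKsimple : ∀ i, LieAlgebra.IsSimple ℝ ↥(K i))
    (π : Fin s → (L →ₗ[ℝ] L))
    (hπmem : ∀ i X, π i X ∈ K i)
    (hπsum : ∀ X : L, ∑ i, π i X = X)
    (hπid : ∀ i X, X ∈ K i → π i X = X)
    (hπzero : ∀ i j, i ≠ j → ∀ X, X ∈ K i → π j X = 0)
    -- the subalgebra k, its center k₀ and its t simple ideals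
    (k : LieSubalgebra ℝ L)
    (k₀ : LieSubalgebra ℝ L)
    (hk₀ : ∀ W : L, W ∈ k₀ ↔ (W ∈ k ∧ ∀ Z ∈ k, ⁅Z, W⁆ = 0))
    {t : ℕ} (kj : Fin t → LieSubalgebra ℝ L)
    (hkjsub : ∀ j, (kj j : Set L) ⊆ (k : Set L))
    (hkjideal : ∀ (j : Fin t) (Z W : L), Z ∈ k → W ∈ kj j → ⁅Z, W⁆ ∈ kj j)
    (hkjsimple : ∀ j, LieAlgebra.IsSimple ℝ ↥(kj j))
    (hkdecomp : ∀ Z ∈ k, ∃ (Z₀ : L) (f : Fin t → L),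
      Z₀ ∈ k₀ ∧ (∀ j, f j ∈ kj j) ∧ Z = Z₀ + ∑ j, f j)
    (hkindep : ∀ (Z₀ : L) (f : Fin t → L), Z₀ ∈ k₀ → (∀ j, f j ∈ kj j) →
      Z₀ + ∑ j, f j = 0 → Z₀ = 0 ∧ ∀ j, f j = 0) :
    ((s : ℤ) - t - (Module.finrank ℝ ↥k₀ * (Module.finrank ℝ ↥k₀ + 1)) / 2
        ≤ (Module.finrank ℝ ↥(biinvVanishingOn k) : ℤ))
    ∧ Module.finrank ℝ ↥(biinvVanishingOn k) ≤ s
    ∧ (Module.finrank ℝ ↥(biinvVanishingOn k) = s ↔ k = ⊥) := by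
  classical
  obtain ⟨P, hPdef⟩ : ∃ P : L →ₗ[ℝ] L →ₗ[ℝ] ℝ, P = -killingForm ℝ L := ⟨_, rfl⟩
  have hP : ∀ x y, P x y = P y x := fun x y => by
    simp only [hPdef, LinearMap.neg_apply, killingForm, LieModule.traceForm_comm ℝ L L x y]
  have hPpos : ∀ x, x ≠ 0 → 0 < P x x := fun x hx => by
    simpa [hPdef] using hκneg x hx
  have hPinv : ∀ x y z : L, P ⁅x, y⁆ z = - P y ⁅x, z⁆ := fun x y z => by
    simp only [hPdef, LinearMap.neg_apply]
    rw [← lie_skew, map_neg, LinearMap.neg_apply, killingForm,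
      LieModule.traceForm_apply_lie_apply]
  have hKne : ∀ i j, i ≠ j → ∀ x ∈ K i, ∀ y ∈ K j, ⁅x, y⁆ = 0 := by
    intro i j hij x hx y hy
    have h1 : ⁅x, y⁆ ∈ K j := hKideal j x y hy
    have h2 : ⁅x, y⁆ ∈ K i := by
      rw [← lie_skew]
      exact neg_mem (hKideal i y x hx)
    rw [← hπid j _ h1]
    exact hπzero i j hij _ h2
  have hπlie : ∀ (i : Fin s) (X Y : L), π i ⁅X, Y⁆ = ⁅X, π i Y⁆ := by
    intro i X Y
    conv_lhs => rw [← hπsum Y]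
    rw [lie_sum, map_sum, Finset.sum_eq_single i]
    · exact hπid i _ (hKideal i _ _ (hπmem i Y))
    · intro j _ hj
      exact hπzero j i hj _ (hKideal j _ _ (hπmem j Y))
    · simp
  obtain ⟨Φ, hΦdef⟩ : ∃ Φ, Φ = sumForm P π := ⟨_, rfl⟩
  have hΦ : ∀ c X Y, Φ c X Y = ∑ i, c i * P (π i X) (π i Y) := by
    intro c X Y
    rw [hΦdef, sumForm_apply]
  have hΦsym : ∀ c X Y, Φ c X Y = Φ c Y X := by
    intro c X Y
    rw [hΦ, hΦ]
    exact Finset.sum_congr rfl fun i _ => by rw [hP]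
  have hΦinv : ∀ (c : Fin s → ℝ) (X Y Z : L), Φ c ⁅X, Y⁆ Z = - Φ c Y ⁅X, Z⁆ := by
    intro c X Y Z
    rw [hΦ, hΦ, ← Finset.sum_neg_distrib]
    exact Finset.sum_congr rfl fun i _ => by rw [hπlie, hπlie, hPinv]; ring
  have hΦinj : Function.Injective Φ := by
    refine (injective_iff_map_eq_zero Φ).2 fun c hc => ?_
    ext i
    obtain ⟨x, hx, hx0⟩ := exists_ne_zero_mem_of_isSimple (K i) (hKsimple i)
    have h := LinearMap.congr_fun₂ hc x x
    rw [hΦ, Finset.sum_eq_single i, hπid i x hx] at h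
    · simpa [(hPpos x hx0).ne'] using h
    · intro j _ hj
      simp [hπzero i j hj.symm x hx]
    · simp
  have hΦsurj : ∀ Q : L →ₗ[ℝ] L →ₗ[ℝ] ℝ, (∀ X Y, Q X Y = Q Y X) →
      (∀ X Y Z : L, Q ⁅X, Y⁆ Z = - Q Y ⁅X, Z⁆) → ∃ c, Φ c = Q := by
    intro Q hQ hQinv
    choose c hc using fun i => exists_eq_smul_on (K i) (hKsimple i) P Q hP hPpos hPinv hQ hQinv
    refine ⟨c, ?_⟩
    ext X Y
    conv_rhs => rw [← hπsum X, ← hπsum Y]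
    rw [hΦ, map_sum Q, LinearMap.sum_apply]
    refine Finset.sum_congr rfl fun i _ => ?_
    rw [map_sum, Finset.sum_eq_single i]
    · exact (hc i _ (hπmem i X) _ (hπmem i Y)).symm
    · intro j _ hj
      exact form_eq_zero_of_commute (K i) (hKsimple i) Q hQinv _
        (fun a ha => hKne i j hj.symm a ha _ (hπmem j Y)) _ (hπmem i X)
    · simp
  -- coefficient vectors of the forms in `V`
  obtain ⟨C, hCdef⟩ : ∃ C, C = (biinvVanishingOn k).comap Φ := ⟨_, rfl⟩
  have hCmem : ∀ c, c ∈ C ↔ ∀ Z ∈ k, ∀ W ∈ k, Φ c Z W = 0 := by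
    intro c
    rw [hCdef]
    exact ⟨fun h => h.2.2, fun h => ⟨hΦsym c, hΦinv c, h⟩⟩
  have hVC : Module.finrank ℝ ↥(biinvVanishingOn k) = Module.finrank ℝ ↥C := by
    have hmap : C.map Φ = biinvVanishingOn k := by
      rw [hCdef]
      apply Submodule.map_comap_eq_self
      rintro Q ⟨h1, h2, -⟩
      exact hΦsurj Q h1 h2
    rw [← hmap]
    exact (LinearEquiv.finrank_eq (Submodule.equivMapOfInjective Φ hΦinj C)).symm
  rw [hVC]
  have hle : Module.finrank ℝ ↥C ≤ s := by
    simpa using Submodule.finrank_le C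
  refine ⟨?_, hle, ?_, ?_⟩
  · choose x hxmem hx0 using fun j => exists_ne_zero_mem_of_isSimple (kj j) (hkjsimple j)
    let b := Module.finBasis ℝ ↥k₀
    let ψ := testMap Φ x (fun i => (b i : L))
    have hker : LinearMap.ker ψ ≤ C := by
      intro c hc
      have hc' : ψ c = 0 := hc
      have hcx : ∀ j, Φ c (x j) (x j) = 0 := fun j => congrFun (congrArg Prod.fst hc') j
      have hcb : ∀ i j, Φ c (b i) (b j) = 0 := by
        intro i j
        have h : Φ c (b (Quot.out s(i, j)).1) (b (Quot.out s(i, j)).2) = 0 :=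
          congrFun (congrArg Prod.snd hc') s(i, j)
        have ho : s((Quot.out s(i, j)).1, (Quot.out s(i, j)).2) = s(i, j) := Quot.out_eq _
        rcases Sym2.eq_iff.mp ho with ⟨h1, h2⟩ | ⟨h1, h2⟩
        · rwa [h1, h2] at h
        · rwa [h1, h2, hΦsym] at h
      have h00 : ∀ Z ∈ k₀, ∀ W ∈ k₀, Φ c Z W = 0 := by
        have hz : (Φ c).compl₁₂ k₀.toSubmodule.subtype k₀.toSubmodule.subtype = 0 :=
          LinearMap.BilinForm.ext_basis b fun i j => hcb i j
        intro Z hZ W hW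
        exact LinearMap.congr_fun₂ hz ⟨Z, hZ⟩ ⟨W, hW⟩
      have hj0 : ∀ j, ∀ Z ∈ kj j, ∀ W ∈ k₀, Φ c Z W = 0 := by
        intro j Z hZ W hW
        exact form_eq_zero_of_commute (kj j) (hkjsimple j) _ (hΦinv c) W
          (fun a ha => ((hk₀ W).1 hW).2 a (hkjsub j ha)) Z hZ
      have hjj : ∀ j, ∀ Z ∈ kj j, ∀ W ∈ kj j, Φ c Z W = 0 := by
        intro j Z hZ W hW
        obtain ⟨r, hr⟩ := exists_eq_smul_on (kj j) (hkjsimple j) P (Φ c) hP hPpos hPinv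
          (hΦsym c) (hΦinv c)
        have h := hr _ (hxmem j) _ (hxmem j)
        rw [hcx j, eq_comm, mul_eq_zero] at h
        rw [hr Z hZ W hW, h.resolve_right (hPpos _ (hx0 j)).ne', zero_mul]
      have hij : ∀ i j, ∀ Z ∈ kj i, ∀ W ∈ kj j, Φ c Z W = 0 := by
        intro i j Z hZ W hW
        rcases eq_or_ne i j with rfl | hne
        · exact hjj i Z hZ W hW
        refine form_eq_zero_of_commute (kj i) (hkjsimple i) _ (hΦinv c) W (fun a ha => ?_) Z hZ
        have h1 : ⁅a, W⁆ ∈ kj j := hkjideal j _ _ (hkjsub i ha) hW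
        have h2 : ⁅a, W⁆ ∈ kj i := by
          rw [← lie_skew]
          exact neg_mem (hkjideal i _ _ (hkjsub j hW) ha)
        -- `u - u = 0` is a decomposition of zero with components in `kj i` and `kj j`
        have h := (hkindep 0 (Pi.single i ⁅a, W⁆ - Pi.single j ⁅a, W⁆) (zero_mem _) (fun l => ?_)
          (by simp [Finset.sum_sub_distrib])).2 i
        · simpa [hne] using h
        · rw [Pi.sub_apply]
          refine sub_mem ?_ ?_
          · rcases eq_or_ne l i with rfl | hl
            · simpa using h2
            · simp [hl]
          · rcases eq_or_ne l j with rfl | hl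
            · simpa using h1
            · simp [hl]
      rw [hCmem]
      intro Z hZ W hW
      obtain ⟨Z₀, f, hZ₀, hf, rfl⟩ := hkdecomp Z hZ
      obtain ⟨W₀, g, hW₀, hg, rfl⟩ := hkdecomp W hW
      simp only [map_add, map_sum, LinearMap.add_apply, LinearMap.sum_apply]
      simp [h00 _ hZ₀ _ hW₀, fun j => hj0 j _ (hf j) _ hW₀,
        fun j => (hΦsym c Z₀ (g j)).trans (hj0 j _ (hg j) _ hZ₀),
        fun i j => hij i j _ (hf i) _ (hg j)]
    have h1 := LinearMap.finrank_range_add_finrank_ker ψ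
    have h2 := Submodule.finrank_le (LinearMap.range ψ)
    have h3 := Submodule.finrank_mono hker
    rw [finrank_test_target] at h2
    rw [Module.finrank_fin_fun] at h1
    have h4 : s ≤ t + Module.finrank ℝ ↥k₀ * (Module.finrank ℝ ↥k₀ + 1) / 2
        + Module.finrank ℝ ↥C := by omega
    zify at h4
    linarith
  · intro hs
    have htop : C = ⊤ := Submodule.eq_top_of_finrank_eq (by simpa using hs)
    rw [eq_bot_iff]
    intro Z hZ
    rw [LieSubalgebra.mem_bot]
    have h := (hCmem (fun _ => 1)).1 (htop ▸ Submodule.mem_top) Z hZ Z hZ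
    rw [hΦ] at h
    have hnn : ∀ i ∈ Finset.univ, 0 ≤ (1 : ℝ) * P (π i Z) (π i Z) := by
      intro i _
      rw [one_mul]
      rcases eq_or_ne (π i Z) 0 with h0 | h0
      · simp [h0]
      · exact (hPpos _ h0).le
    rw [Finset.sum_eq_zero_iff_of_nonneg hnn] at h
    rw [← hπsum Z]
    refine Finset.sum_eq_zero fun i hi => ?_
    by_contra h0
    have := h i hi
    rw [one_mul] at this
    exact (hPpos _ h0).ne' this
  · rintro rfl
    have htop : C = ⊤ := by
      rw [eq_top_iff]
      intro c _
      rw [hCmem]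
      intro Z hZ W _
      rw [LieSubalgebra.mem_bot] at hZ
      simp [hZ]
    rw [htop, finrank_top, Module.finrank_fin_fun]
end

section
/- The following conditions are equivalent: (i) there is a subset I ⊆ {1,…,s} with π_i(k) = 0 for every i ∉ I such that the pair (⊕_{i∈I} g_i, k) is aligned; (ii) the vector space of bi-invariant symmetric bilinear forms Q on g with Q|_{k×k} = 0 has dimension s − 1; (iii) there exists an inner product ⟨·,·⟩ on k such that for every bi-invariant symmetric bilinear form Q on g the restriction Q|_{k×k} is a real scalar multiple of ⟨·,·⟩. -/
/-!
Write `κ` for the Killing form of `g` and `κ_i` for the Killing form of `g_i` pulled back to `g`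
along `π_i`, so that `κ = ∑ κ_i`. Each of the three conditions is shown to be equivalent to

  (C) for every `i` there is a real number `a_i` with `κ_i = a_i κ` on `k × k`

(`ComponentsProportional`).

The basic fact is that the bi-invariant symmetric forms on `g` are exactly the combinations
`∑ q_i κ_i`. Distinct simple ideals are orthogonal for such a form because they are perfect and
commute; on one simple ideal the form is represented with respect to the definite form `κ` by a
symmetric operator, whose real eigenspaces are ideals (`invariant_form_unique`). The `κ_i` are
linearly independent, so the space of these forms has dimension `s`.

For (ii), the forms vanishing on `k` are the kernel of the restriction map to `k`, which is nonzero
on `κ`; by rank-nullity the kernel has dimension `s - 1` iff every `κ_i` restricts to a multiple of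
`κ` (`vanishing_iff`). For (iii), under (C) the inner product `-κ` works, and conversely the given
inner product is a multiple of `κ` on `k` (`innerProduct_iff`).

For (i) ⇒ (C), the blocks `k_0, k_1, …, k_t` of `k` are mutually orthogonal for every bi-invariant
form, and on each block the alignment conditions say that `c_i κ_i` does not depend on `i ∈ I`; since
`∑ 1 / c_i = 1`, the common value is `κ`. For (C) ⇒ (i), take `I = {i | a_i ≠ 0}` and
`c_i = 1 / a_i`: then `a_i ≥ 0`, `∑ a_i = 1`, `π_i` is injective on `k` for `i ∈ I`, and `λ_j` is the
positive ratio between the Killing form of `k_j` and `κ` on `k_j` (`aligned_iff`).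
-/

open scoped BigOperators

/-! ### Definite forms and operators -/

/-- The inner product on a real vector space given by minus a negative-definite symmetric form. -/
@[reducible] noncomputable def negDefCore {V : Type*} [AddCommGroup V] [Module ℝ V]
    (B : V →ₗ[ℝ] V →ₗ[ℝ] ℝ) (hsymm : ∀ x y, B x y = B y x) (hneg : ∀ x, x ≠ 0 → B x x < 0) :
    InnerProductSpace.Core ℝ V where
  inner x y := -B x y
  conj_inner_symm x y := by simp [hsymm x y]
  re_inner_nonneg x := by
    by_cases hx : x = 0
    · simp [hx]
    · simpa using (hneg x hx).le
  add_left x y z := by simp; ring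
  smul_left x y r := by simp
  definite x hx := by
    by_contra h
    have := hneg x h
    simp at hx
    linarith

lemma exists_eigenvector_of_symm {V : Type*} [AddCommGroup V] [Module ℝ V]
    [FiniteDimensional ℝ V] [Nontrivial V]
    (B : V →ₗ[ℝ] V →ₗ[ℝ] ℝ) (hsymm : ∀ x y, B x y = B y x) (hneg : ∀ x, x ≠ 0 → B x x < 0)
    (A : V →ₗ[ℝ] V) (hA : ∀ x y, B (A x) y = B x (A y)) :
    ∃ (q : ℝ) (v : V), v ≠ 0 ∧ A v = q • v := by
  let core := negDefCore B hsymm hneg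
  let : NormedAddCommGroup V := core.toNormedAddCommGroup
  let : InnerProductSpace ℝ V := InnerProductSpace.ofCore core.toCore
  have hs : A.IsSymmetric := fun x y => by
    change -B (A x) y = -B x (A y)
    rw [hA]
  obtain ⟨v, hv⟩ := hs.hasEigenvalue_iSup_of_finiteDimensional.exists_hasEigenvector
  exact ⟨_, v, hv.2, hv.apply_eq_smul⟩

/-- A skew operator has `tr A² < 0` unless it vanishes: in an orthonormal basis
`tr A² = -∑ ‖A e‖²`. -/
lemma trace_sq_neg_of_skew {V : Type*} [AddCommGroup V] [Module ℝ V]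
    [FiniteDimensional ℝ V]
    (B : V →ₗ[ℝ] V →ₗ[ℝ] ℝ) (hsymm : ∀ x y, B x y = B y x) (hneg : ∀ x, x ≠ 0 → B x x < 0)
    (A : V →ₗ[ℝ] V) (hA : ∀ x y, B (A x) y = -B x (A y)) (hA0 : A ≠ 0) :
    LinearMap.trace ℝ V (A ∘ₗ A) < 0 := by
  let core := negDefCore B hsymm hneg
  let : NormedAddCommGroup V := core.toNormedAddCommGroup
  let : InnerProductSpace ℝ V := InnerProductSpace.ofCore core.toCore
  let b := stdOrthonormalBasis ℝ V
  have key : ∀ x : V, inner ℝ x ((A ∘ₗ A) x) = B (A x) (A x) := fun x => by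
    change -B x (A (A x)) = _
    rw [hA]
  rw [LinearMap.trace_eq_sum_inner _ b]
  simp only [key]
  have hle : ∀ x : V, B x x ≤ 0 := fun x => by
    by_cases hx : x = 0
    · simp [hx]
    · exact (hneg x hx).le
  refine Finset.sum_neg' (fun i _ => hle _) ?_
  by_contra! hcon
  apply hA0
  refine b.toBasis.ext fun i => ?_
  by_contra hne
  exact absurd (hneg (A (b i)) (by simpa using hne)) (not_lt.2 (hcon i (Finset.mem_univ _)))

/-! ### Invariant forms on simple Lie algebras -/

section Simple

variable {G : Type*} [LieRing G] [LieAlgebra ℝ G]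

/-- Simple Lie algebras are perfect, phrased in terms of linear functionals. -/
lemma eq_zero_of_vanish_lie (hG : LieAlgebra.IsSimple ℝ G) (f : G →ₗ[ℝ] ℝ)
    (hf : ∀ x y : G, f ⁅x, y⁆ = 0) : f = 0 := by
  let I : LieIdeal ℝ G := { LinearMap.ker f with lie_mem := fun {x m} _ => by simpa using hf x m }
  have hI : ∀ x, x ∈ I ↔ f x = 0 := fun x => LinearMap.mem_ker
  rcases hG.eq_bot_or_eq_top I with h | h
  · refine absurd ⟨fun x y => ?_⟩ hG.non_abelian
    have : ⁅x, y⁆ ∈ I := (hI _).2 (hf x y)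
    rw [h] at this
    simpa using this
  · ext x
    simpa using (hI x).1 (h ▸ LieSubmodule.mem_top x)

/-- Schur's lemma for compact simple algebras: the operator representing `Q` with respect to the
definite form `B` is `B`-symmetric, hence has a real eigenvalue, and its eigenspace is an ideal. -/
lemma invariant_form_unique [FiniteDimensional ℝ G] (hG : LieAlgebra.IsSimple ℝ G)
    (B Q : G →ₗ[ℝ] G →ₗ[ℝ] ℝ)
    (hBsymm : ∀ x y, B x y = B y x) (hBneg : ∀ x, x ≠ 0 → B x x < 0)
    (hBinv : ∀ x y z : G, B ⁅x, y⁆ z = -B y ⁅x, z⁆)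
    (hQsymm : ∀ x y, Q x y = Q y x)
    (hQinv : ∀ x y z : G, Q ⁅x, y⁆ z = -Q y ⁅x, z⁆) :
    ∃ q : ℝ, ∀ x y, Q x y = q * B x y := by
  have hnt : Nontrivial G := by
    by_contra h
    rw [not_nontrivial_iff_subsingleton] at h
    exact hG.non_abelian ⟨fun x y => Subsingleton.elim _ _⟩
  have hBinj : Function.Injective B := by
    rw [injective_iff_map_eq_zero]
    intro x hx
    by_contra hne
    have := hBneg x hne
    simp [hx] at this
  let e : G ≃ₗ[ℝ] (G →ₗ[ℝ] ℝ) :=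
    LinearEquiv.ofInjectiveOfFinrankEq B hBinj (by
      exact (Subspace.dual_finrank_eq (K := ℝ) (V := G)).symm)
  let A : G →ₗ[ℝ] G := e.symm.toLinearMap ∘ₗ Q
  have hA : ∀ x y, B (A x) y = Q x y := fun x y => by
    have : e (A x) = Q x := by simp [A]
    exact congrArg (fun f : G →ₗ[ℝ] ℝ => f y) this
  obtain ⟨q, v, hv, hAv⟩ := exists_eigenvector_of_symm B hBsymm hBneg A
    (fun x y => by rw [hA, hBsymm, hA, hQsymm])
  let I : LieIdeal ℝ G :=
    { LinearMap.ker (Q - q • B) with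
      lie_mem := fun {x m} hm => by
        have hm' : (Q - q • B) m = 0 := hm
        change (Q - q • B) ⁅x, m⁆ = 0
        ext z
        have := congrArg (fun f : G →ₗ[ℝ] ℝ => f ⁅x, z⁆) hm'
        simp at this
        simp [hQinv, hBinv]
        linarith }
  have hI : ∀ x, x ∈ I ↔ (Q - q • B) x = 0 := fun x => LinearMap.mem_ker
  have hvI : v ∈ I := by
    rw [hI]
    ext z
    simp [← hA, hAv]
  rcases hG.eq_bot_or_eq_top I with h | h
  · rw [h] at hvI
    exact absurd (by simpa using hvI) hv
  · refine ⟨q, fun x y => ?_⟩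
    have := congrArg (fun f : G →ₗ[ℝ] ℝ => f y) ((hI x).1 (h ▸ LieSubmodule.mem_top x))
    simp at this
    linarith

/-- The Killing form of a simple algebra is a positive multiple of any negative-definite
invariant form; positivity holds since both forms are negative at a vector. -/
lemma killingForm_eq_pos_mul [FiniteDimensional ℝ G] (hG : LieAlgebra.IsSimple ℝ G)
    (B : G →ₗ[ℝ] G →ₗ[ℝ] ℝ)
    (hBsymm : ∀ x y, B x y = B y x) (hBneg : ∀ x, x ≠ 0 → B x x < 0)
    (hBinv : ∀ x y z : G, B ⁅x, y⁆ z = -B y ⁅x, z⁆) :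
    ∃ q : ℝ, 0 < q ∧ ∀ x y, killingForm ℝ G x y = q * B x y := by
  obtain ⟨q, hq⟩ := invariant_form_unique hG B (killingForm ℝ G) hBsymm hBneg hBinv
    (LieModule.traceForm_comm ℝ G G) (LieModule.traceForm_apply_lie_apply' ℝ G G)
  refine ⟨q, ?_, hq⟩
  obtain ⟨x, hx⟩ : ∃ x : G, LieAlgebra.ad ℝ G x ≠ 0 := by
    by_contra! h
    exact hG.non_abelian ⟨fun x y => by
      simpa using congrArg (fun f : Module.End ℝ G => f y) (h x)⟩
  have h1 := trace_sq_neg_of_skew B hBsymm hBneg (LieAlgebra.ad ℝ G x)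
    (fun y z => by simpa using hBinv x y z) hx
  rw [← killingForm_apply_apply, hq] at h1
  have h2 := hBneg x (by rintro rfl; simp at hx)
  nlinarith

/-- The Killing form of an ideal is the restriction of the ambient Killing form. -/
lemma killingForm_ideal [FiniteDimensional ℝ G] (H : LieSubalgebra ℝ G)
    (hH : ∀ X Y : G, Y ∈ H → ⁅X, Y⁆ ∈ H) (x y : H) :
    killingForm ℝ H x y = killingForm ℝ G x y := by
  let I : LieIdeal ℝ G := { H.toSubmodule with lie_mem := fun {X Y} h => hH X Y h }
  exact congrArg (fun f : LinearMap.BilinForm ℝ I => f x y) (LieIdeal.killingForm_eq ℝ G I)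

end Simple

/-! ### Bi-invariant forms on a sum of simple ideals -/

section Decomposition

variable {L : Type} [LieRing L] [LieAlgebra ℝ L] {s : ℕ}

/-- `L` is the direct sum of the simple ideals `K i`, with projections `π i`. -/
structure IsSimpleDecomposition (K : Fin s → LieSubalgebra ℝ L) (π : Fin s → (L →ₗ[ℝ] L)) :
    Prop where
  ideal : ∀ (i : Fin s) (X Y : L), Y ∈ K i → ⁅X, Y⁆ ∈ K i
  simple : ∀ i, LieAlgebra.IsSimple ℝ ↥(K i)
  mem : ∀ i X, π i X ∈ K i
  sum : ∀ X : L, ∑ i, π i X = X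
  id : ∀ i X, X ∈ K i → π i X = X
  zero : ∀ i j, i ≠ j → ∀ X, X ∈ K i → π j X = 0

/-- The Killing form of the `i`-th simple ideal, pulled back to `L` along `π i`. -/
noncomputable def compForm (π : Fin s → (L →ₗ[ℝ] L)) (i : Fin s) : L →ₗ[ℝ] L →ₗ[ℝ] ℝ :=
  (killingForm ℝ L).compl₁₂ (π i) (π i)

@[simp] lemma compForm_apply (π : Fin s → (L →ₗ[ℝ] L)) (i : Fin s) (X Y : L) :
    compForm π i X Y = killingForm ℝ L (π i X) (π i Y) := rfl

/-- Every component of the Killing form restricts to `k` as a multiple of the Killing form of `L`.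
All three conditions of the theorem are equivalent to this one. -/
def ComponentsProportional (π : Fin s → (L →ₗ[ℝ] L)) (k : LieSubalgebra ℝ L) : Prop :=
  ∃ a : Fin s → ℝ, ∀ i, ∀ Z ∈ k, ∀ W ∈ k,
    killingForm ℝ L (π i Z) (π i W) = a i * killingForm ℝ L Z W

namespace IsSimpleDecomposition

variable {K : Fin s → LieSubalgebra ℝ L} {π : Fin s → (L →ₗ[ℝ] L)}

lemma lie_eq_zero (D : IsSimpleDecomposition K π) {i j : Fin s} (hij : i ≠ j) {X Y : L}
    (hX : X ∈ K i) (hY : Y ∈ K j) : ⁅X, Y⁆ = 0 := by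
  have h1 : ⁅X, Y⁆ ∈ K j := D.ideal j X Y hY
  have h2 : ⁅X, Y⁆ ∈ K i := by
    rw [← lie_skew]
    exact neg_mem (D.ideal i Y X hX)
  rw [← D.id i _ h2, D.zero j i hij.symm _ h1]

lemma lie_proj (D : IsSimpleDecomposition K π) (i : Fin s) {X : L} (hX : X ∈ K i) (Y : L) :
    ⁅X, Y⁆ = ⁅X, π i Y⁆ := by
  conv_lhs => rw [← D.sum Y, lie_sum]
  exact Finset.sum_eq_single i (fun j _ hj => D.lie_eq_zero hj.symm hX (D.mem j Y)) (by simp)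

lemma map_lie (D : IsSimpleDecomposition K π) (i : Fin s) (X Y : L) :
    π i ⁅X, Y⁆ = ⁅π i X, π i Y⁆ := by
  have hmem : ∀ j, ⁅π j X, Y⁆ ∈ K j := fun j => by
    rw [← lie_skew]
    exact neg_mem (D.ideal j Y _ (D.mem j X))
  conv_lhs => rw [← D.sum X, sum_lie, map_sum]
  rw [Finset.sum_eq_single i (fun j _ hj => D.zero j i hj _ (hmem j)) (by simp),
    D.id i _ (hmem i), D.lie_proj i (D.mem i X)]

/-- The projection `π i` as a homomorphism of Lie algebras. -/
def projHom (D : IsSimpleDecomposition K π) (i : Fin s) : L →ₗ⁅ℝ⁆ L :=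
  { π i with map_lie' := fun {X Y} => D.map_lie i X Y }

@[simp] lemma projHom_apply (D : IsSimpleDecomposition K π) (i : Fin s) (X : L) :
    D.projHom i X = π i X := rfl

/-- Distinct simple ideals are orthogonal for every invariant form, being perfect and commuting
with each other. -/
lemma form_cross (D : IsSimpleDecomposition K π) (Q : L →ₗ[ℝ] L →ₗ[ℝ] ℝ)
    (hQinv : ∀ X Y Z : L, Q ⁅X, Y⁆ Z = -Q Y ⁅X, Z⁆) {i j : Fin s} (hij : i ≠ j) {X Y : L}
    (hX : X ∈ K i) (hY : Y ∈ K j) : Q X Y = 0 := by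
  have h := eq_zero_of_vanish_lie (D.simple i)
    ((Q.flip Y) ∘ₗ (K i).toSubmodule.subtype) (fun x y => by
      change Q ⁅(x : L), (y : L)⁆ Y = 0
      rw [hQinv, D.lie_eq_zero hij x.2 hY, map_zero, neg_zero])
  exact congrArg (fun f : ↥(K i) →ₗ[ℝ] ℝ => f ⟨X, hX⟩) h

lemma form_eq_sum (D : IsSimpleDecomposition K π) (Q : L →ₗ[ℝ] L →ₗ[ℝ] ℝ)
    (hQinv : ∀ X Y Z : L, Q ⁅X, Y⁆ Z = -Q Y ⁅X, Z⁆) (X Y : L) :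
    Q X Y = ∑ i, Q (π i X) (π i Y) := by
  conv_lhs => rw [← D.sum X, ← D.sum Y]
  simp only [map_sum, LinearMap.sum_apply]
  refine Finset.sum_congr rfl fun i _ => ?_
  exact Finset.sum_eq_single i
    (fun j _ hj => D.form_cross Q hQinv hj (D.mem j X) (D.mem i Y)) (by simp)

lemma killingForm_eq_sum (D : IsSimpleDecomposition K π) (X Y : L) :
    killingForm ℝ L X Y = ∑ i, killingForm ℝ L (π i X) (π i Y) :=
  D.form_eq_sum _ (LieModule.traceForm_apply_lie_apply' ℝ L L) X Y

lemma compForm_inv (D : IsSimpleDecomposition K π) (i : Fin s) (X Y Z : L) :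
    compForm π i ⁅X, Y⁆ Z = -compForm π i Y ⁅X, Z⁆ := by
  simp only [compForm_apply, D.map_lie]
  exact LieModule.traceForm_apply_lie_apply' ℝ L L _ _ _

variable [FiniteDimensional ℝ L]

/-- The forms `compForm π i` span the bi-invariant symmetric forms. -/
lemma exists_coeff (D : IsSimpleDecomposition K π)
    (hneg : ∀ X : L, X ≠ 0 → killingForm ℝ L X X < 0) (Q : L →ₗ[ℝ] L →ₗ[ℝ] ℝ)
    (hQsymm : ∀ X Y : L, Q X Y = Q Y X)
    (hQinv : ∀ X Y Z : L, Q ⁅X, Y⁆ Z = -Q Y ⁅X, Z⁆) :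
    ∃ q : Fin s → ℝ, Q = ∑ i, q i • compForm π i := by
  have h : ∀ i, ∃ q : ℝ, ∀ x y : K i, Q x y = q * killingForm ℝ L x y := fun i =>
    invariant_form_unique (D.simple i)
      ((killingForm ℝ L).compl₁₂ (K i).toSubmodule.subtype (K i).toSubmodule.subtype)
      (Q.compl₁₂ (K i).toSubmodule.subtype (K i).toSubmodule.subtype)
      (fun x y => LieModule.traceForm_comm ℝ L L _ _)
      (fun x hx => hneg x (by simpa using hx))
      (fun x y z => LieModule.traceForm_apply_lie_apply' ℝ L L (x : L) y z)
      (fun x y => hQsymm _ _) (fun x y z => hQinv x y z)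
  choose q hq using h
  refine ⟨q, ?_⟩
  ext X Y
  rw [D.form_eq_sum Q hQinv]
  simp only [LinearMap.sum_apply, LinearMap.smul_apply, smul_eq_mul, compForm_apply]
  exact Finset.sum_congr rfl fun i _ => hq i ⟨_, D.mem i X⟩ ⟨_, D.mem i Y⟩

end IsSimpleDecomposition

/-! ### Dimension count and inner products -/

/-- The linear combination `∑ q i • compForm π i` as a linear function of `q`. -/
noncomputable def combForm (π : Fin s → (L →ₗ[ℝ] L)) :
    (Fin s → ℝ) →ₗ[ℝ] (L →ₗ[ℝ] L →ₗ[ℝ] ℝ) :=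
  Fintype.linearCombination ℝ (compForm π)

lemma combForm_eq (π : Fin s → (L →ₗ[ℝ] L)) (q : Fin s → ℝ) :
    combForm π q = ∑ i, q i • compForm π i := rfl

lemma combForm_apply (π : Fin s → (L →ₗ[ℝ] L)) (q : Fin s → ℝ) (X Y : L) :
    combForm π q X Y = ∑ i, q i * killingForm ℝ L (π i X) (π i Y) := by
  simp [combForm_eq, LinearMap.sum_apply]

lemma combForm_injective {K : Fin s → LieSubalgebra ℝ L} {π : Fin s → (L →ₗ[ℝ] L)}
    (D : IsSimpleDecomposition K π) (hneg : ∀ X : L, X ≠ 0 → killingForm ℝ L X X < 0) :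
    Function.Injective (combForm π) := by
  rw [injective_iff_map_eq_zero]
  intro q hq
  ext j
  obtain ⟨x, hx⟩ : ∃ x : K j, x ≠ 0 := by
    by_contra! h
    exact (D.simple j).non_abelian ⟨fun x y => h _⟩
  have hx' : (x : L) ≠ 0 := by simpa using hx
  have h1 := combForm_apply π q x x
  rw [hq, Finset.sum_eq_single j (fun i _ hi => by simp [D.zero j i hi.symm x x.2]) (by simp),
    D.id j x x.2] at h1
  rcases mul_eq_zero.1 h1.symm with h | h
  · exact h
  · exact absurd h (hneg x hx').ne

lemma exists_ne_zero {k : LieSubalgebra ℝ L} (hk : k ≠ ⊥) : ∃ X ∈ k, X ≠ 0 := by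
  by_contra! h
  exact hk ((LieSubalgebra.eq_bot_iff _).2 h)

/-- A linear map which is nonzero at `v` has rank one exactly when its image is spanned by the
image of `v`. -/
lemma finrank_ker_add_one_iff {n : ℕ} {V : Type*} [AddCommGroup V] [Module ℝ V]
    (ρ : (Fin n → ℝ) →ₗ[ℝ] V) (v : Fin n → ℝ) (hv : ρ v ≠ 0) :
    Module.finrank ℝ (LinearMap.ker ρ) + 1 = n ↔ ∀ q, ∃ c : ℝ, c • ρ v = ρ q := by
  have hrn := LinearMap.finrank_range_add_finrank_ker ρ
  rw [Module.finrank_fin_fun] at hrn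
  have hrank : Module.finrank ℝ (LinearMap.ker ρ) + 1 = n ↔
      Module.finrank ℝ (LinearMap.range ρ) = 1 := by omega
  rw [hrank, finrank_eq_one_iff_of_nonzero' (⟨ρ v, LinearMap.mem_range_self _ _⟩ :
    LinearMap.range ρ) (fun h => hv (congrArg Subtype.val h))]
  simp [Subtype.ext_iff]

lemma vanishing_iff [FiniteDimensional ℝ L] {K : Fin s → LieSubalgebra ℝ L} {π : Fin s → (L →ₗ[ℝ] L)}
    (D : IsSimpleDecomposition K π) (hneg : ∀ X : L, X ≠ 0 → killingForm ℝ L X X < 0)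
    {k : LieSubalgebra ℝ L} (hk : k ≠ ⊥) :
    Module.finrank ℝ ↥(biinvVanishingOn k) + 1 = s ↔ ComponentsProportional π k := by
  -- `r` restricts forms to `k`; the forms vanishing on `k` are the kernel of `r ∘ combForm π`.
  let r : (L →ₗ[ℝ] L →ₗ[ℝ] ℝ) →ₗ[ℝ] (k → k → ℝ) :=
    { toFun := fun Q x y => Q x y
      map_add' := fun _ _ => rfl
      map_smul' := fun _ _ => rfl }
  let ρ := r ∘ₗ combForm π
  have hmap : biinvVanishingOn k = (LinearMap.ker ρ).map (combForm π) := by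
    ext Q
    rw [Submodule.mem_map]
    constructor
    · rintro ⟨h1, h2, h3⟩
      obtain ⟨q, rfl⟩ := D.exists_coeff hneg Q h1 h2
      refine ⟨q, ?_, rfl⟩
      rw [LinearMap.mem_ker]
      ext x y
      exact h3 x x.2 y y.2
    · rintro ⟨q, hq, rfl⟩
      refine ⟨fun X Y => ?_, fun X Y Z => ?_, fun Z hZ W hW => ?_⟩
      · simp only [combForm_apply]
        exact Finset.sum_congr rfl fun i _ => by
          rw [LieModule.traceForm_comm ℝ L L (π i X)]
      · have := D.compForm_inv (π := π)
        simp only [compForm_apply] at this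
        simp [combForm_apply, this]
      · exact congrArg (fun f : k → k → ℝ => f ⟨Z, hZ⟩ ⟨W, hW⟩) (LinearMap.mem_ker.1 hq)
  have hfin : Module.finrank ℝ ↥(biinvVanishingOn k) = Module.finrank ℝ (LinearMap.ker ρ) := by
    rw [hmap]
    exact (LinearEquiv.finrank_eq
      (Submodule.equivMapOfInjective _ (combForm_injective D hneg) (LinearMap.ker ρ))).symm
  -- The Killing form is the image of `(1, …, 1)`.
  have hone : ∀ X Y, combForm π (fun _ => 1) X Y = killingForm ℝ L X Y := fun X Y => by
    rw [combForm_apply, D.killingForm_eq_sum]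
    simp
  have hv : ρ (fun _ => 1) ≠ 0 := by
    obtain ⟨X, hX, hX0⟩ := exists_ne_zero hk
    intro h'
    have : combForm π (fun _ => 1) X X = 0 :=
      congrArg (fun f : k → k → ℝ => f ⟨X, hX⟩ ⟨X, hX⟩) h'
    rw [hone] at this
    exact (hneg X hX0).ne this
  rw [hfin]
  refine (finrank_ker_add_one_iff ρ _ hv).trans ?_
  constructor
  · intro h
    have : ∀ i, ∃ c : ℝ, ∀ Z ∈ k, ∀ W ∈ k,
        killingForm ℝ L (π i Z) (π i W) = c * killingForm ℝ L Z W := fun i => by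
      obtain ⟨c, h1⟩ := h (Pi.single i 1)
      refine ⟨c, fun Z hZ W hW => ?_⟩
      have h2 : c * combForm π (fun _ => 1) Z W = combForm π (Pi.single i 1) Z W :=
        congrArg (fun f : k → k → ℝ => f ⟨Z, hZ⟩ ⟨W, hW⟩) h1
      rw [hone] at h2
      rw [h2, combForm_apply,
        Finset.sum_eq_single i (fun j _ hj => by simp [hj]) (by simp)]
      simp
    choose a ha using this
    exact ⟨a, ha⟩
  · rintro ⟨a, ha⟩ q
    refine ⟨∑ i, q i * a i, ?_⟩
    ext x y
    change (∑ i, q i * a i) * combForm π (fun _ => 1) x y = combForm π q x y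
    rw [hone, combForm_apply, Finset.sum_mul]
    refine Finset.sum_congr rfl fun i _ => ?_
    rw [ha i x x.2 y y.2, mul_assoc]

lemma innerProduct_iff [FiniteDimensional ℝ L] {K : Fin s → LieSubalgebra ℝ L} {π : Fin s → (L →ₗ[ℝ] L)}
    (D : IsSimpleDecomposition K π) (hneg : ∀ X : L, X ≠ 0 → killingForm ℝ L X X < 0)
    {k : LieSubalgebra ℝ L} (hk : k ≠ ⊥) :
    ComponentsProportional π k ↔ ∃ ip : L →ₗ[ℝ] L →ₗ[ℝ] ℝ,
          (∀ Z ∈ k, ∀ W ∈ k, ip Z W = ip W Z)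
          ∧ (∀ Z ∈ k, Z ≠ 0 → 0 < ip Z Z)
          ∧ (∀ Q : L →ₗ[ℝ] L →ₗ[ℝ] ℝ,
              (∀ X Y : L, Q X Y = Q Y X) →
              (∀ X Y Z : L, Q ⁅X, Y⁆ Z = - Q Y ⁅X, Z⁆) →
              ∃ r : ℝ, ∀ Z ∈ k, ∀ W ∈ k, Q Z W = r * ip Z W) := by
  constructor
  · rintro ⟨a, ha⟩
    refine ⟨-killingForm ℝ L, fun Z _ W _ => ?_, fun Z _ hZ => ?_, fun Q h1 h2 => ?_⟩
    · simp only [LinearMap.neg_apply]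
      rw [LieModule.traceForm_comm]
    · simpa using hneg Z hZ
    · obtain ⟨q, rfl⟩ := D.exists_coeff hneg Q h1 h2
      refine ⟨-∑ i, q i * a i, fun Z hZ W hW => ?_⟩
      rw [← combForm_eq, combForm_apply, LinearMap.neg_apply, LinearMap.neg_apply, neg_mul_neg,
        Finset.sum_mul]
      refine Finset.sum_congr rfl fun i _ => ?_
      rw [ha i Z hZ W hW, mul_assoc]
  · rintro ⟨ip, -, -, h⟩
    obtain ⟨R, hR⟩ := h (killingForm ℝ L) (LieModule.traceForm_comm ℝ L L)
      (LieModule.traceForm_apply_lie_apply' ℝ L L)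
    have hR0 : R ≠ 0 := by
      rintro rfl
      obtain ⟨X, hX, hX0⟩ := exists_ne_zero hk
      have := hR X hX X hX
      rw [zero_mul] at this
      exact (hneg X hX0).ne this
    choose r hr using fun i => h (compForm π i)
      (fun X Y => LieModule.traceForm_comm ℝ L L _ _) (D.compForm_inv i)
    refine ⟨fun i => r i / R, fun i Z hZ W hW => ?_⟩
    rw [hR Z hZ W hW, ← compForm_apply, hr i Z hZ W hW]
    field_simp


/-! ### Aligned pairs -/

/-- An injective homomorphism preserves Killing forms. -/
lemma killingForm_image {f : L →ₗ⁅ℝ⁆ L} {H P : LieSubalgebra ℝ L}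
    (hP : (P : Set L) = f '' (H : Set L)) (hinj : ∀ x ∈ H, f x = 0 → x = 0)
    {Z W : L} (hZ : Z ∈ H) (hW : W ∈ H) (hZP : f Z ∈ P) (hWP : f W ∈ P) :
    killingForm ℝ P ⟨f Z, hZP⟩ ⟨f W, hWP⟩ = killingForm ℝ H ⟨Z, hZ⟩ ⟨W, hW⟩ := by
  let g : H →ₗ⁅ℝ⁆ L := f.comp H.incl
  obtain rfl : P = g.range := by
    apply SetLike.coe_injective
    rw [hP]
    ext y
    simp [g]
  have hg : Function.Injective g := by
    rw [injective_iff_map_eq_zero]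
    exact fun x hx => Subtype.ext (hinj x x.2 hx)
  exact LieAlgebra.killingForm_of_equiv_apply (LieEquiv.ofInjective g hg) ⟨Z, hZ⟩ ⟨W, hW⟩

/-- `k` is the direct sum of its center `k₀` and the simple ideals `kj j`. -/
structure IsReductiveDecomposition {t : ℕ} (k k₀ : LieSubalgebra ℝ L)
    (kj : Fin t → LieSubalgebra ℝ L) : Prop where
  center : ∀ W : L, W ∈ k₀ ↔ (W ∈ k ∧ ∀ Z ∈ k, ⁅Z, W⁆ = 0)
  sub : ∀ j, (kj j : Set L) ⊆ (k : Set L)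
  ideal : ∀ (j : Fin t) (Z W : L), Z ∈ k → W ∈ kj j → ⁅Z, W⁆ ∈ kj j
  simple : ∀ j, LieAlgebra.IsSimple ℝ ↥(kj j)
  decomp : ∀ Z ∈ k, ∃ (Z₀ : L) (f : Fin t → L),
      Z₀ ∈ k₀ ∧ (∀ j, f j ∈ kj j) ∧ Z = Z₀ + ∑ j, f j
  indep : ∀ (Z₀ : L) (f : Fin t → L), Z₀ ∈ k₀ → (∀ j, f j ∈ kj j) →
      Z₀ + ∑ j, f j = 0 → Z₀ = 0 ∧ ∀ j, f j = 0

namespace IsReductiveDecomposition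

variable {t : ℕ} {k k₀ : LieSubalgebra ℝ L} {kj : Fin t → LieSubalgebra ℝ L}

lemma eq_zero_of_mem_of_mem (E : IsReductiveDecomposition k k₀ kj) {j l : Fin t} (hjl : j ≠ l)
    {x : L} (hj : x ∈ kj j) (hl : x ∈ kj l) : x = 0 := by
  have h := E.indep 0 (Pi.single j x - Pi.single l x) (zero_mem _) (fun m => ?_) ?_
  · have := h.2 j
    simpa [hjl] using this
  · rw [Pi.sub_apply]
    refine sub_mem ?_ ?_
    · by_cases hm : m = j
      · subst hm
        simpa using hj
      · simp [hm]
    · by_cases hm : m = l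
      · subst hm
        simpa using hl
      · simp [hm]
  · simp [Finset.sum_sub_distrib]

/-- The ideal `kj j` is perfect, so it is orthogonal to everything commuting with it. -/
lemma form_eq_zero_of_commute (E : IsReductiveDecomposition k k₀ kj) (Q : L →ₗ[ℝ] L →ₗ[ℝ] ℝ)
    (hQinv : ∀ X Y Z : L, Q ⁅X, Y⁆ Z = -Q Y ⁅X, Z⁆) {j : Fin t} {X Y : L}
    (hX : X ∈ kj j) (hY : ∀ A ∈ kj j, ⁅A, Y⁆ = 0) : Q X Y = 0 := by
  have h := eq_zero_of_vanish_lie (E.simple j)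
    ((Q.flip Y) ∘ₗ (kj j).toSubmodule.subtype) (fun x y => by
      change Q ⁅(x : L), (y : L)⁆ Y = 0
      rw [hQinv, hY x x.2, map_zero, neg_zero])
  exact congrArg (fun f : ↥(kj j) →ₗ[ℝ] ℝ => f ⟨X, hX⟩) h

/-- A bi-invariant form which vanishes on the blocks `k₀` and `kj j` vanishes on `k`. -/
lemma form_eq_zero (E : IsReductiveDecomposition k k₀ kj) (Q : L →ₗ[ℝ] L →ₗ[ℝ] ℝ)
    (hQsymm : ∀ X Y : L, Q X Y = Q Y X)
    (hQinv : ∀ X Y Z : L, Q ⁅X, Y⁆ Z = -Q Y ⁅X, Z⁆)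
    (h₀ : ∀ Z ∈ k₀, ∀ W ∈ k₀, Q Z W = 0)
    (hj : ∀ j, ∀ Z ∈ kj j, ∀ W ∈ kj j, Q Z W = 0)
    {Z W : L} (hZ : Z ∈ k) (hW : W ∈ k) : Q Z W = 0 := by
  have hj0 : ∀ j, ∀ X ∈ kj j, ∀ Y ∈ k₀, Q X Y = 0 := fun j X hX Y hY =>
    E.form_eq_zero_of_commute Q hQinv hX fun A hA => ((E.center Y).1 hY).2 A (E.sub j hA)
  have hjl : ∀ j l, ∀ X ∈ kj j, ∀ Y ∈ kj l, Q X Y = 0 := fun j l X hX Y hY => by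
    by_cases h : j = l
    · subst h
      exact hj j X hX Y hY
    · refine E.form_eq_zero_of_commute Q hQinv hX fun A hA => ?_
      refine E.eq_zero_of_mem_of_mem h ?_ (E.ideal l A Y (E.sub j hA) hY)
      rw [← lie_skew]
      exact neg_mem (E.ideal j Y A (E.sub l hY) hA)
  obtain ⟨Z₀, f, hZ₀, hf, rfl⟩ := E.decomp Z hZ
  obtain ⟨W₀, g, hW₀, hg, rfl⟩ := E.decomp W hW
  simp only [map_add, map_sum, LinearMap.add_apply, LinearMap.sum_apply]
  simp [h₀ Z₀ hZ₀ W₀ hW₀, hQsymm Z₀, hj0 _ _ (hf _) _ hW₀, hj0 _ _ (hg _) _ hZ₀,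
    hjl _ _ _ (hf _) _ (hg _)]

end IsReductiveDecomposition

/-- If `κ_i(Z, W) = b / c i` on `I` with `∑ 1 / c i = 1`, then summing over `i` shows that `b` is
the value of the Killing form. -/
lemma component_eq_of_common {K : Fin s → LieSubalgebra ℝ L} {π : Fin s → (L →ₗ[ℝ] L)}
    (D : IsSimpleDecomposition K π) {I : Finset (Fin s)} {c : Fin s → ℝ}
    (hsum : ∑ i ∈ I, 1 / c i = 1) {Z W : L} (hout : ∀ i ∉ I, π i Z = 0) {b : ℝ}
    (hb : ∀ i ∈ I, killingForm ℝ L (π i Z) (π i W) = 1 / c i * b) {i : Fin s} (hi : i ∈ I) :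
    killingForm ℝ L (π i Z) (π i W) = 1 / c i * killingForm ℝ L Z W := by
  have : killingForm ℝ L Z W = b := by
    rw [D.killingForm_eq_sum, ← Finset.sum_subset (Finset.subset_univ I)
      (fun j _ hj => by simp [hout j hj]), Finset.sum_congr rfl hb, ← Finset.sum_mul, hsum, one_mul]
  rw [this, hb i hi]

lemma aligned_iff [FiniteDimensional ℝ L] {K : Fin s → LieSubalgebra ℝ L} {π : Fin s → (L →ₗ[ℝ] L)}
    (D : IsSimpleDecomposition K π) (hneg : ∀ X : L, X ≠ 0 → killingForm ℝ L X X < 0)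
    (hπmem : ∀ i X, π i X ∈ K i)
    {t : ℕ} {k k₀ : LieSubalgebra ℝ L} {kj : Fin t → LieSubalgebra ℝ L}
    (hk : k ≠ ⊥) (E : IsReductiveDecomposition k k₀ kj) :
    (∃ I : Finset (Fin s),
        (∀ i ∉ I, ∀ Z ∈ k, π i Z = 0) ∧
        ∃ (c : Fin s → ℝ) (lam : Fin t → ℝ)
          (P : Fin s → Fin t → LieSubalgebra ℝ L)
          (hPK : ∀ i j (U : L), U ∈ P i j → U ∈ K i)
          (ip0 : L →ₗ[ℝ] L →ₗ[ℝ] ℝ),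
          (∀ i ∈ I, 0 < c i) ∧ (∀ j, 0 < lam j)
          ∧ (∀ i j, (P i j : Set L) = (π i) '' (kj j : Set L))
          ∧ (∀ i ∈ I, ∀ j, P i j ≠ ⊥)
          ∧ (∀ i ∈ I, ∀ (j : Fin t) (U V : ↥(P i j)),
              killingForm ℝ ↥(P i j) U V
                = (lam j * c i) * killingForm ℝ ↥(K i)
                    ⟨(U : L), hPK i j U U.2⟩ ⟨(V : L), hPK i j V V.2⟩)
          ∧ (∀ Z ∈ k₀, ∀ W ∈ k₀, ip0 Z W = ip0 W Z)
          ∧ (∀ Z ∈ k₀, Z ≠ 0 → 0 < ip0 Z Z)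
          ∧ (∀ i ∈ I, ∀ Z ∈ k₀, ∀ W ∈ k₀,
              killingForm ℝ ↥(K i) ⟨π i Z, hπmem i Z⟩ ⟨π i W, hπmem i W⟩
                = -(1 / c i) * ip0 Z W)
          ∧ (∑ i ∈ I, 1 / c i = 1))
      ↔ ComponentsProportional π k := by
  constructor
  · rintro ⟨I, hout, c, lam, P, hPK, ip0, hc, hlam, hP, hPne, hκ, -, -, hip, hsum⟩
    refine ⟨fun i => if i ∈ I then 1 / c i else 0, fun i Z hZ W hW => ?_⟩
    by_cases hi : i ∈ I
    swap
    · simp [hi, hout i hi Z hZ]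
    simp only [hi, if_true]
    have h := E.form_eq_zero (compForm π i - (1 / c i) • killingForm ℝ L)
      (fun X Y => ?_) (fun X Y Z => ?_) (fun Z hZ W hW => ?_) (fun j Z hZ W hW => ?_) hZ hW
    · simpa [sub_eq_zero] using h
    · simp only [LinearMap.sub_apply, LinearMap.smul_apply, compForm_apply]
      rw [LieModule.traceForm_comm ℝ L L X, LieModule.traceForm_comm ℝ L L (π i X)]
    · simp only [LinearMap.sub_apply, LinearMap.smul_apply, D.compForm_inv,
        LieModule.traceForm_apply_lie_apply' ℝ L L X Y Z, smul_eq_mul]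
      ring
    · have := component_eq_of_common D hsum (Z := Z) (W := W)
        (fun i hi => hout i hi Z ((E.center Z).1 hZ).1) (b := -ip0 Z W)
        (fun i hi => by
          rw [← killingForm_ideal (K i) (D.ideal i) ⟨_, hπmem i Z⟩ ⟨_, hπmem i W⟩,
            hip i hi Z hZ W hW]
          ring) hi
      simpa [sub_eq_zero] using this
    · -- The common value is `κ_{kj j}(Z, W) / lam j`, since `π i` embeds `kj j` for `i ∈ I`.
      have := component_eq_of_common D hsum (Z := Z) (W := W)
        (fun i hi => hout i hi Z (E.sub j hZ))
        (b := (lam j)⁻¹ * killingForm ℝ (kj j) ⟨Z, hZ⟩ ⟨W, hW⟩)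
        (fun i hi => by
          have hinj : ∀ x ∈ kj j, D.projHom i x = 0 → x = 0 := by
            rcases (E.simple j).eq_bot_or_eq_top ((D.projHom i).comp (kj j).incl).ker with h | h
            · intro x hx hx0
              have : (⟨x, hx⟩ : kj j) ∈ ((D.projHom i).comp (kj j).incl).ker := by
                simpa using hx0
              rw [h] at this
              exact congrArg Subtype.val ((LieSubmodule.mem_bot _).1 this)
            · refine absurd ((LieSubalgebra.eq_bot_iff _).2 fun y hy => ?_) (hPne i hi j)
              have hy' : y ∈ (P i j : Set L) := hy
              rw [hP] at hy'
              obtain ⟨x, hx, rfl⟩ := hy'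
              have : (⟨x, hx⟩ : kj j) ∈ ((D.projHom i).comp (kj j).incl).ker := by
                rw [h]
                trivial
              simpa using this
          have hmem : ∀ x ∈ kj j, π i x ∈ P i j := fun x hx => by
            rw [← SetLike.mem_coe, hP]
            exact ⟨x, hx, rfl⟩
          have h1 := killingForm_image (f := D.projHom i) (hP i j) hinj hZ hW (hmem Z hZ) (hmem W hW)
          have h2 := hκ i hi j ⟨π i Z, hmem Z hZ⟩ ⟨π i W, hmem W hW⟩
          rw [killingForm_ideal (K i) (D.ideal i)] at h2
          rw [← h1]
          simp only [IsSimpleDecomposition.projHom_apply]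
          rw [h2]
          have := (hc i hi).ne'
          have := (hlam j).ne'
          field_simp) hi
      simpa [sub_eq_zero] using this
  · rintro ⟨a, ha⟩
    obtain ⟨X, hX, hX0⟩ := exists_ne_zero hk
    have hXneg := hneg X hX0
    have hle : ∀ Y, killingForm ℝ L Y Y ≤ 0 := fun Y => by
      by_cases hY : Y = 0
      · simp [hY]
      · exact (hneg Y hY).le
    have ha0 : ∀ i, 0 ≤ a i := fun i => by
      have h1 := ha i X hX X hX
      have h2 := hle (π i X)
      by_contra! h
      nlinarith
    have hasum : ∑ i, a i = 1 := by
      have h1 := D.killingForm_eq_sum X X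
      rw [Finset.sum_congr rfl (fun i _ => ha i X hX X hX), ← Finset.sum_mul] at h1
      exact mul_right_cancel₀ hXneg.ne (by rw [one_mul, ← h1])
    have hinj : ∀ i, a i ≠ 0 → ∀ x ∈ k, π i x = 0 → x = 0 := fun i hi x hx hx0 => by
      by_contra hne
      have h1 := ha i x hx x hx
      rw [hx0, map_zero, eq_comm, mul_eq_zero] at h1
      exact h1.elim hi (hneg x hne).ne
    have hlam : ∀ j, ∃ q : ℝ, 0 < q ∧ ∀ x y : kj j,
        killingForm ℝ (kj j) x y = q * killingForm ℝ L x y := fun j =>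
      killingForm_eq_pos_mul (E.simple j)
        ((killingForm ℝ L).compl₁₂ (kj j).toSubmodule.subtype (kj j).toSubmodule.subtype)
        (fun x y => LieModule.traceForm_comm ℝ L L _ _)
        (fun x hx => hneg x (by simpa using hx))
        (fun x y z => LieModule.traceForm_apply_lie_apply' ℝ L L (x : L) y z)
    choose lam hlam0 hlam using hlam
    have hP : ∀ i j, (((kj j).map (D.projHom i) : LieSubalgebra ℝ L) : Set L)
        = (π i) '' (kj j : Set L) := fun i j => rfl
    refine ⟨Finset.univ.filter fun i => a i ≠ 0, fun i hi Z hZ => ?_, fun i => (a i)⁻¹, lam,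
      fun i j => (kj j).map (D.projHom i), ?_, -killingForm ℝ L, fun i hi => ?_, hlam0, hP,
      fun i hi j hbot => ?_, fun i hi j U V => ?_, fun Z _ W _ => ?_, fun Z _ hZ => ?_,
      fun i hi Z hZ W hW => ?_, ?_⟩
    · have hai : a i = 0 := by simpa using hi
      by_contra hne
      have h1 := hneg _ hne
      rw [ha i Z hZ Z hZ, hai, zero_mul] at h1
      exact lt_irrefl _ h1
    · rintro i j _ ⟨x, -, rfl⟩
      exact hπmem i x
    · have hai : a i ≠ 0 := by simpa using hi
      exact inv_pos.2 ((ha0 i).lt_of_ne' hai)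
    · have hai : a i ≠ 0 := by simpa using hi
      refine (E.simple j).non_abelian ⟨fun x y => Subtype.ext ?_⟩
      refine hinj i hai _ (E.sub j ⁅x, y⁆.2) ?_
      have hmem : π i (⁅x, y⁆ : kj j) ∈ (kj j).map (D.projHom i) := ⟨_, ⁅x, y⁆.2, rfl⟩
      have hbot' : (kj j).map (D.projHom i) = ⊥ := hbot
      rw [hbot'] at hmem
      simpa using hmem
    · have hai : a i ≠ 0 := by simpa using hi
      obtain ⟨_, Z, hZ, rfl⟩ := U
      obtain ⟨_, W, hW, rfl⟩ := V
      rw [killingForm_ideal (K i) (D.ideal i)]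
      refine (killingForm_image (f := D.projHom i) (hP i j)
        (fun x hx => hinj i hai x (E.sub j hx)) hZ hW _ _).trans ?_
      rw [hlam]
      change lam j * killingForm ℝ L Z W
        = lam j * (a i)⁻¹ * killingForm ℝ L (π i Z) (π i W)
      rw [ha i Z (E.sub j hZ) W (E.sub j hW)]
      field_simp
    · simp only [LinearMap.neg_apply]
      rw [LieModule.traceForm_comm]
    · simpa using hneg Z hZ
    · rw [killingForm_ideal (K i) (D.ideal i)]
      simp only [LinearMap.neg_apply]
      rw [ha i Z ((E.center Z).1 hZ).1 W ((E.center W).1 hW).1]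
      simp
    · simp only [one_div, inv_inv]
      rw [Finset.sum_filter_ne_zero, hasum]

end Decomposition

/-- `g = g_1 ⊕ … ⊕ g_s` semisimple with negative-definite Killing form,
`k = k₀ ⊕ k_1 ⊕ … ⊕ k_t ⊆ g` a nonzero subalgebra (`k₀` the center, `k_j` the simple
ideals).  The following are equivalent:
(i) there is `I ⊆ {1,…,s}` with `π_i(k) = 0` for `i ∉ I` such that `(⊕_{i∈I} g_i, k)`
is aligned; (ii) the space of bi-invariant symmetric bilinear forms `Q` with
`Q|_{k×k} = 0` has dimension `s - 1`; (iii) there is an inner product `⟨·,·⟩` on `k`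
such that `Q|_{k×k}` is a scalar multiple of `⟨·,·⟩` for every bi-invariant symmetric
bilinear form `Q` on `g`. -/
theorem stmt_8
    {L : Type} [LieRing L] [LieAlgebra ℝ L] [FiniteDimensional ℝ L]
    (hκneg : ∀ X : L, X ≠ 0 → killingForm ℝ L X X < 0)
    {s : ℕ} (K : Fin s → LieSubalgebra ℝ L)
    (hKideal : ∀ (i : Fin s) (X Y : L), Y ∈ K i → ⁅X, Y⁆ ∈ K i)
    (hKsimple : ∀ i, LieAlgebra.IsSimple ℝ ↥(K i))
    (π : Fin s → (L →ₗ[ℝ] L))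
    (hπmem : ∀ i X, π i X ∈ K i)
    (hπsum : ∀ X : L, ∑ i, π i X = X)
    (hπid : ∀ i X, X ∈ K i → π i X = X)
    (hπzero : ∀ i j, i ≠ j → ∀ X, X ∈ K i → π j X = 0)
    (k : LieSubalgebra ℝ L) (hk : k ≠ ⊥)
    (k₀ : LieSubalgebra ℝ L)
    (hk₀ : ∀ W : L, W ∈ k₀ ↔ (W ∈ k ∧ ∀ Z ∈ k, ⁅Z, W⁆ = 0))
    {t : ℕ} (kj : Fin t → LieSubalgebra ℝ L)
    (hkjsub : ∀ j, (kj j : Set L) ⊆ (k : Set L))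
    (hkjideal : ∀ (j : Fin t) (Z W : L), Z ∈ k → W ∈ kj j → ⁅Z, W⁆ ∈ kj j)
    (hkjsimple : ∀ j, LieAlgebra.IsSimple ℝ ↥(kj j))
    (hkdecomp : ∀ Z ∈ k, ∃ (Z₀ : L) (f : Fin t → L),
      Z₀ ∈ k₀ ∧ (∀ j, f j ∈ kj j) ∧ Z = Z₀ + ∑ j, f j)
    (hkindep : ∀ (Z₀ : L) (f : Fin t → L), Z₀ ∈ k₀ → (∀ j, f j ∈ kj j) →
      Z₀ + ∑ j, f j = 0 → Z₀ = 0 ∧ ∀ j, f j = 0) :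
    -- (i) ↔ (ii)
    ((∃ I : Finset (Fin s),
        (∀ i ∉ I, ∀ Z ∈ k, π i Z = 0) ∧
        ∃ (c : Fin s → ℝ) (lam : Fin t → ℝ)
          (P : Fin s → Fin t → LieSubalgebra ℝ L)
          (hPK : ∀ i j (U : L), U ∈ P i j → U ∈ K i)
          (ip0 : L →ₗ[ℝ] L →ₗ[ℝ] ℝ),
          (∀ i ∈ I, 0 < c i) ∧ (∀ j, 0 < lam j)
          ∧ (∀ i j, (P i j : Set L) = (π i) '' (kj j : Set L))
          ∧ (∀ i ∈ I, ∀ j, P i j ≠ ⊥)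
          ∧ (∀ i ∈ I, ∀ (j : Fin t) (U V : ↥(P i j)),
              killingForm ℝ ↥(P i j) U V
                = (lam j * c i) * killingForm ℝ ↥(K i)
                    ⟨(U : L), hPK i j U U.2⟩ ⟨(V : L), hPK i j V V.2⟩)
          ∧ (∀ Z ∈ k₀, ∀ W ∈ k₀, ip0 Z W = ip0 W Z)
          ∧ (∀ Z ∈ k₀, Z ≠ 0 → 0 < ip0 Z Z)
          ∧ (∀ i ∈ I, ∀ Z ∈ k₀, ∀ W ∈ k₀,
              killingForm ℝ ↥(K i) ⟨π i Z, hπmem i Z⟩ ⟨π i W, hπmem i W⟩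
                = -(1 / c i) * ip0 Z W)
          ∧ (∑ i ∈ I, 1 / c i = 1))
      ↔ Module.finrank ℝ ↥(biinvVanishingOn k) + 1 = s)
    ∧
    -- (ii) ↔ (iii)
    ((Module.finrank ℝ ↥(biinvVanishingOn k) + 1 = s)
      ↔ ∃ ip : L →ₗ[ℝ] L →ₗ[ℝ] ℝ,
          (∀ Z ∈ k, ∀ W ∈ k, ip Z W = ip W Z)
          ∧ (∀ Z ∈ k, Z ≠ 0 → 0 < ip Z Z)
          ∧ (∀ Q : L →ₗ[ℝ] L →ₗ[ℝ] ℝ,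
              (∀ X Y : L, Q X Y = Q Y X) →
              (∀ X Y Z : L, Q ⁅X, Y⁆ Z = - Q Y ⁅X, Z⁆) →
              ∃ r : ℝ, ∀ Z ∈ k, ∀ W ∈ k, Q Z W = r * ip Z W)) := by
  have D : IsSimpleDecomposition K π :=
    ⟨hKideal, hKsimple, hπmem, hπsum, hπid, hπzero⟩
  have E : IsReductiveDecomposition k k₀ kj :=
    ⟨hk₀, hkjsub, hkjideal, hkjsimple, hkdecomp, hkindep⟩
  exact ⟨(aligned_iff D hκneg hπmem hk E).trans (vanishing_iff D hκneg hk).symm,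
    (vanishing_iff D hκneg hk).trans (innerProduct_iff D hκneg hk)⟩
end

section
/- If (g,k) is aligned with constants c_1,…,c_s and λ_1,…,λ_t, then every bi-invariant symmetric bilinear form Q = y_1·κ_{g_1} + … + y_s·κ_{g_s} on g satisfies Q(Z,W) = (y_1/c_1 + … + y_s/c_s)·κ_g(Z,W) for all Z,W ∈ k, where κ_g is the Killing form of g. In particular, Q|_{k×k} = 0 if and only if y_1/c_1 + … + y_s/c_s = 0. -/
open scoped BigOperators

/-!
Write `B_i(Z, W) = κ_{g_i}(Z_i, W_i)`. The Killing form of `g` restricts to the one of `g_i` on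
the ideal `g_i`, and distinct `g_i` are Killing-orthogonal, so `κ_g = ∑ i, B_i`. The theorem
follows once `c_i B_i` is shown, on `k × k`, not to depend on `i`: if `F` is the common value, then
`B_i = F / c_i`, and `∑ i, 1 / c_i = 1` gives `F = κ_g` on `k`.

On `k_0 × k_0` this independence is the assumption on the inner product of the center. On
`k_j × k_j` it holds because `π_i` maps the simple algebra `k_j` isomorphically onto `π_i(k_j)`,
so that `c_i B_i = κ_{k_j} / λ_j`. For `k_j × k`, perfectness of `k_j` allows the first argument to
be a bracket `[X, Y]` of elements of `k_j`, and invariance of `B_i` gives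
`B_i([X, Y], W) = B_i(X, [Y, W])` with `[Y, W] ∈ k_j`; this treats all mixed terms at once.
-/

/-- The Killing form of an ideal (given as a subalgebra stable under brackets with `L`) is the
restriction of the Killing form of `L`. -/
theorem killingForm_restrict_ideal
    {L : Type} [LieRing L] [LieAlgebra ℝ L] [FiniteDimensional ℝ L]
    (I : LieSubalgebra ℝ L) (hI : ∀ X Y : L, Y ∈ I → ⁅X, Y⁆ ∈ I) (X Y : I) :
    killingForm ℝ I X Y = killingForm ℝ L X Y := by
  rw [killingForm_apply_apply, killingForm_apply_apply]
  have hmem : ∀ T : L, (LieAlgebra.ad ℝ L (X : L) ∘ₗ LieAlgebra.ad ℝ L (Y : L)) T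
      ∈ I.toSubmodule := by
    intro T
    have hY : ⁅(Y : L), T⁆ ∈ I := by
      rw [← lie_skew]
      exact neg_mem (hI _ _ Y.2)
    exact hI _ _ hY
  exact LinearMap.trace_restrict_eq_of_forall_mem I.toSubmodule _ hmem

theorem killingForm_eq_zero_of_lie_lie_eq_zero
    {L : Type} [LieRing L] [LieAlgebra ℝ L] (X Y : L) (h : ∀ T : L, ⁅X, ⁅Y, T⁆⁆ = 0) :
    killingForm ℝ L X Y = 0 := by
  have h0 : LieAlgebra.ad ℝ L X ∘ₗ LieAlgebra.ad ℝ L Y = 0 := LinearMap.ext h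
  rw [killingForm_apply_apply, h0, map_zero]

theorem killingForm_lie_left
    {L : Type} [LieRing L] [LieAlgebra ℝ L] (X Y Z : L) :
    killingForm ℝ L ⁅X, Y⁆ Z = killingForm ℝ L X ⁅Y, Z⁆ :=
  LieModule.traceForm_apply_lie_apply ℝ L L X Y Z

/-- A simple Lie algebra is perfect: it is spanned by brackets. -/
theorem span_lie_eq_top_of_isSimple
    {L : Type} [LieRing L] [LieAlgebra ℝ L] (h : LieAlgebra.IsSimple ℝ L) :
    Submodule.span ℝ {Z : L | ∃ X Y : L, ⁅X, Y⁆ = Z} = ⊤ := by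
  have hspan := LieSubmodule.lieIdeal_oper_eq_linear_span' (R := ℝ) (L := L) (M := L)
    (I := (⊤ : LieIdeal ℝ L)) (N := (⊤ : LieIdeal ℝ L))
  rcases h.eq_bot_or_eq_top ⁅(⊤ : LieIdeal ℝ L), (⊤ : LieIdeal ℝ L)⁆ with hb | ht
  · exfalso
    refine h.non_abelian ⟨fun X Y => ?_⟩
    have hXY := LieSubmodule.lie_mem_lie (LieSubmodule.mem_top (R := ℝ) (L := L) X)
      (LieSubmodule.mem_top (R := ℝ) (L := L) Y)
    rw [hb] at hXY
    simpa using hXY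
  · rw [ht] at hspan
    simpa using hspan.symm

/-- A surjective homomorphism from a simple Lie algebra onto a nonzero one is an isomorphism, since
its kernel is a proper ideal; hence it preserves Killing forms. -/
theorem killingForm_of_isSimple_of_surjective
    {A B : Type} [LieRing A] [LieAlgebra ℝ A] [LieRing B] [LieAlgebra ℝ B]
    (hA : LieAlgebra.IsSimple ℝ A) (f : A →ₗ⁅ℝ⁆ B) (hf : Function.Surjective f)
    (hB : ∃ b : B, b ≠ 0) (X Y : A) :
    killingForm ℝ B (f X) (f Y) = killingForm ℝ A X Y := by
  have hinj : Function.Injective f := by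
    rcases hA.eq_bot_or_eq_top f.ker with hb | ht
    · exact f.ker_eq_bot.mp hb
    · exfalso
      obtain ⟨b, hb⟩ := hB
      obtain ⟨a, rfl⟩ := hf b
      have ha : a ∈ f.ker := ht ▸ LieSubmodule.mem_top a
      exact hb (by simpa using ha)
  exact LieAlgebra.killingForm_of_equiv_apply (LieEquiv.ofBijective f ⟨hinj, hf⟩) X Y

set_option maxHeartbeats 1000000 in
/-- Let `(g, k)` be an aligned pair (Definition: `g = g_1 ⊕ … ⊕ g_s`
semisimple with negative-definite Killing form and simple ideals `K i`, `k` a nonzero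
subalgebra with center `k₀` and simple ideals `kj j`, constants `c_i, λ_j > 0` with
`κ_{π_i(k_j)} = λ_j c_i · κ_{g_i}|`, an inner product `⟨·,·⟩₀` on `k₀` with
`κ_{g_i}(Z_i, W_i) = -(1/c_i)⟨Z,W⟩₀`, and `Σ 1/c_i = 1`).  Here `s = m + 1`.
Then every `Q = y_1 κ_{g_1} + … + y_s κ_{g_s}` satisfies
`Q(Z,W) = (Σ y_i/c_i) · κ_g(Z,W)` for all `Z, W ∈ k`; in particular `Q|_{k×k} = 0`
iff `Σ y_i/c_i = 0`. -/
theorem stmt_9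
    {L : Type} [LieRing L] [LieAlgebra ℝ L] [FiniteDimensional ℝ L]
    (hκneg : ∀ X : L, X ≠ 0 → killingForm ℝ L X X < 0)
    {m : ℕ}
    (K : Fin (m + 1) → LieSubalgebra ℝ L)
    (hKideal : ∀ (i : Fin (m + 1)) (X Y : L), Y ∈ K i → ⁅X, Y⁆ ∈ K i)
    (hKsimple : ∀ i, LieAlgebra.IsSimple ℝ ↥(K i))
    (π : Fin (m + 1) → (L →ₗ[ℝ] L))
    (hπmem : ∀ i X, π i X ∈ K i)
    (hπsum : ∀ X : L, ∑ i, π i X = X)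
    (hπid : ∀ i X, X ∈ K i → π i X = X)
    (hπzero : ∀ i j, i ≠ j → ∀ X, X ∈ K i → π j X = 0)
    (k : LieSubalgebra ℝ L) (hk : k ≠ ⊥)
    (k₀ : LieSubalgebra ℝ L)
    (hk₀ : ∀ W : L, W ∈ k₀ ↔ (W ∈ k ∧ ∀ Z ∈ k, ⁅Z, W⁆ = 0))
    {t : ℕ} (kj : Fin t → LieSubalgebra ℝ L)
    (hkjsub : ∀ j, (kj j : Set L) ⊆ (k : Set L))
    (hkjideal : ∀ (j : Fin t) (Z W : L), Z ∈ k → W ∈ kj j → ⁅Z, W⁆ ∈ kj j)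
    (hkjsimple : ∀ j, LieAlgebra.IsSimple ℝ ↥(kj j))
    (hkdecomp : ∀ Z ∈ k, ∃ (Z₀ : L) (f : Fin t → L),
      Z₀ ∈ k₀ ∧ (∀ j, f j ∈ kj j) ∧ Z = Z₀ + ∑ j, f j)
    -- the aligned conditions
    (c : Fin (m + 1) → ℝ) (hcpos : ∀ i, 0 < c i)
    (lam : Fin t → ℝ) (hlam : ∀ j, 0 < lam j)
    (P : Fin (m + 1) → Fin t → LieSubalgebra ℝ L)
    (hPset : ∀ i j, (P i j : Set L) = (π i) '' (kj j : Set L))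
    (hPK : ∀ i j (U : L), U ∈ P i j → U ∈ K i)
    (hPne : ∀ i j, P i j ≠ ⊥)
    (hkilling : ∀ i j (U V : ↥(P i j)),
      killingForm ℝ ↥(P i j) U V
        = (lam j * c i) * killingForm ℝ ↥(K i) ⟨(U : L), hPK i j U U.2⟩ ⟨(V : L), hPK i j V V.2⟩)
    (ip0 : LinearMap.BilinForm ℝ L)
    (hip0symm : ∀ Z W : L, ip0 Z W = ip0 W Z)
    (hip0pos : ∀ Z ∈ k₀, Z ≠ 0 → 0 < ip0 Z Z)
    (hip0 : ∀ (i : Fin (m + 1)), ∀ Z ∈ k₀, ∀ W ∈ k₀,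
      killingForm ℝ ↥(K i) ⟨π i Z, hπmem i Z⟩ ⟨π i W, hπmem i W⟩ = -(1 / c i) * ip0 Z W)
    (hcsum : ∑ i, 1 / c i = 1) :
    ∀ y : Fin (m + 1) → ℝ,
      (∀ Z ∈ k, ∀ W ∈ k,
        (∑ i, y i * killingForm ℝ ↥(K i) ⟨π i Z, hπmem i Z⟩ ⟨π i W, hπmem i W⟩)
          = (∑ i, y i / c i) * killingForm ℝ L Z W)
      ∧ ((∀ Z ∈ k, ∀ W ∈ k,
            (∑ i, y i * killingForm ℝ ↥(K i) ⟨π i Z, hπmem i Z⟩ ⟨π i W, hπmem i W⟩) = 0)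
          ↔ ∑ i, y i / c i = 0) := by
  -- Distinct simple ideals commute, hence each `π i` is a homomorphism.
  have hcomm : ∀ a b, a ≠ b → ∀ X ∈ K a, ∀ Y ∈ K b, ⁅X, Y⁆ = 0 := by
    intro a b hab X hX Y hY
    have h1 : ⁅X, Y⁆ ∈ K b := hKideal b X Y hY
    have h2 : ⁅X, Y⁆ ∈ K a := by
      rw [← lie_skew]
      exact neg_mem (hKideal a Y X hX)
    rw [← hπid b _ h1]
    exact hπzero a b hab _ h2
  have hlie : ∀ i X Y, π i ⁅X, Y⁆ = ⁅π i X, π i Y⁆ := by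
    intro i X Y
    have hexp : ⁅X, Y⁆ = ∑ a, ⁅π a X, π a Y⁆ := by
      conv_lhs => rw [← hπsum X, ← hπsum Y]
      rw [sum_lie]
      refine Finset.sum_congr rfl fun a _ => ?_
      rw [lie_sum]
      refine Finset.sum_eq_single a (fun b _ hb => ?_) (by simp)
      exact hcomm a b hb.symm _ (hπmem a X) _ (hπmem b Y)
    rw [hexp, map_sum, Finset.sum_eq_single i]
    · exact hπid i _ (hKideal i _ _ (hπmem i Y))
    · intro a _ ha
      exact hπzero a i ha _ (hKideal a _ _ (hπmem a Y))
    · simp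
  have hres : ∀ i Z W, killingForm ℝ ↥(K i) ⟨π i Z, hπmem i Z⟩ ⟨π i W, hπmem i W⟩
      = killingForm ℝ L (π i Z) (π i W) := fun i Z W =>
    killingForm_restrict_ideal (K i) (hKideal i) _ _
  have hsum : ∀ Z W, killingForm ℝ L Z W = ∑ i, killingForm ℝ L (π i Z) (π i W) := by
    intro Z W
    conv_lhs => rw [← hπsum Z, ← hπsum W]
    rw [map_sum (killingForm ℝ L), LinearMap.sum_apply]
    refine Finset.sum_congr rfl fun a _ => ?_
    rw [map_sum]
    refine Finset.sum_eq_single a (fun b _ hb => ?_) (by simp)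
    refine killingForm_eq_zero_of_lie_lie_eq_zero _ _ fun T => ?_
    refine hcomm a b hb.symm _ (hπmem a Z) _ ?_
    rw [← lie_skew]
    exact neg_mem (hKideal b _ _ (hπmem b W))
  simp only [hres] at hip0 ⊢
  -- On `k_j × k_j`, `c_i B_i` is the Killing form of `k_j` divided by `λ_j`.
  have hjj : ∀ i j (X Y : kj j), c i * killingForm ℝ L (π i X) (π i Y)
      = killingForm ℝ (kj j) X Y / lam j := by
    intro i j X Y
    have hmemP : ∀ T : kj j, π i T ∈ P i j := fun T => by
      have : π i T ∈ (P i j : Set L) := by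
        rw [hPset]
        exact ⟨T, T.2, rfl⟩
      exact this
    let f : kj j →ₗ⁅ℝ⁆ P i j :=
      { toFun := fun T => ⟨π i T, hmemP T⟩
        map_add' := fun S T => by ext; simp
        map_smul' := fun r T => by ext; simp
        map_lie' := fun {S T} => by ext; simp [hlie] }
    have hsurj : Function.Surjective f := by
      rintro ⟨U, hU⟩
      have hU' : U ∈ (P i j : Set L) := hU
      rw [hPset] at hU'
      obtain ⟨T, hT, rfl⟩ := hU'
      exact ⟨⟨T, hT⟩, rfl⟩
    have hne : ∃ b : P i j, b ≠ 0 := by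
      by_contra! hall
      refine hPne i j ((LieSubalgebra.eq_bot_iff _).mpr fun U hU => ?_)
      exact congrArg Subtype.val (hall ⟨U, hU⟩)
    have h1 := killingForm_of_isSimple_of_surjective (hkjsimple j) f hsurj hne X Y
    have h2 := hkilling i j (f X) (f Y)
    rw [killingForm_restrict_ideal (K i) (hKideal i)] at h2
    change _ = lam j * c i * killingForm ℝ L (π i X) (π i Y) at h2
    rw [eq_div_iff (hlam j).ne', ← h1, h2]
    ring
  have hjk : ∀ i j, ∀ Z ∈ kj j, ∀ W ∈ k, c i * killingForm ℝ L (π i Z) (π i W)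
      = c 0 * killingForm ℝ L (π 0 Z) (π 0 W) := by
    intro i j Z hZ W hW
    have hZs : (⟨Z, hZ⟩ : kj j) ∈ Submodule.span ℝ {Z : kj j | ∃ X Y : kj j, ⁅X, Y⁆ = Z} := by
      rw [span_lie_eq_top_of_isSimple (hkjsimple j)]
      trivial
    suffices h : ∀ T : kj j, T ∈ Submodule.span ℝ {Z : kj j | ∃ X Y : kj j, ⁅X, Y⁆ = Z} →
        c i * killingForm ℝ L (π i T) (π i W) = c 0 * killingForm ℝ L (π 0 T) (π 0 W) from
      h _ hZs
    intro T hT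
    induction hT using Submodule.span_induction with
    | mem T hT =>
      obtain ⟨X, Y, rfl⟩ := hT
      have hYW : ⁅(Y : L), W⁆ ∈ kj j := by
        rw [← lie_skew]
        exact neg_mem (hkjideal j W Y hW Y.2)
      have key := fun a => hjj a j X ⟨_, hYW⟩
      simp only [LieSubalgebra.coe_bracket, hlie, killingForm_lie_left] at key ⊢
      rw [key i, key 0]
    | zero => simp
    | add S T _ _ hS hT =>
      simp only [AddMemClass.coe_add, map_add, LinearMap.add_apply, mul_add, hS, hT]
    | smul r T _ hT =>
      simp only [SetLike.val_smul, map_smul, LinearMap.smul_apply, smul_eq_mul]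
      linear_combination r * hT
  have hindep : ∀ i, ∀ Z ∈ k, ∀ W ∈ k, c i * killingForm ℝ L (π i Z) (π i W)
      = c 0 * killingForm ℝ L (π 0 Z) (π 0 W) := by
    intro i Z hZ W hW
    obtain ⟨Z₀, f, hZ₀, hf, rfl⟩ := hkdecomp Z hZ
    obtain ⟨W₀, g, hW₀, hg, hWe⟩ := hkdecomp W hW
    have hZ₀k := ((hk₀ Z₀).mp hZ₀).1
    have h00 : c i * killingForm ℝ L (π i Z₀) (π i W₀)
        = c 0 * killingForm ℝ L (π 0 Z₀) (π 0 W₀) := by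
      rw [hip0 i _ hZ₀ _ hW₀, hip0 0 _ hZ₀ _ hW₀]
      have := (hcpos i).ne'
      have := (hcpos 0).ne'
      field_simp
    have h0g : ∀ j, c i * killingForm ℝ L (π i Z₀) (π i (g j))
        = c 0 * killingForm ℝ L (π 0 Z₀) (π 0 (g j)) := fun j => by
      rw [LieModule.traceForm_comm ℝ L L (π i Z₀), LieModule.traceForm_comm ℝ L L (π 0 Z₀)]
      exact hjk i j _ (hg j) _ hZ₀k
    have hfW := fun j => hjk i j _ (hf j) W hW
    have h0W : c i * killingForm ℝ L (π i Z₀) (π i W)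
        = c 0 * killingForm ℝ L (π 0 Z₀) (π 0 W) := by
      rw [hWe]
      simp only [map_add, map_sum, mul_add, Finset.mul_sum, h00, h0g]
    simp only [map_add, map_sum, LinearMap.add_apply, LinearMap.sum_apply, mul_add,
      Finset.mul_sum, h0W, hfW]
  have hB : ∀ i, ∀ Z ∈ k, ∀ W ∈ k,
      killingForm ℝ L (π i Z) (π i W) = 1 / c i * killingForm ℝ L Z W := by
    have h0 : ∀ i, ∀ Z ∈ k, ∀ W ∈ k, killingForm ℝ L (π i Z) (π i W)
        = 1 / c i * (c 0 * killingForm ℝ L (π 0 Z) (π 0 W)) := by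
      intro i Z hZ W hW
      rw [← hindep i Z hZ W hW]
      have := (hcpos i).ne'
      field_simp
    intro i Z hZ W hW
    have hκ : killingForm ℝ L Z W = c 0 * killingForm ℝ L (π 0 Z) (π 0 W) := by
      rw [hsum, Finset.sum_congr rfl fun a _ => h0 a Z hZ W hW, ← Finset.sum_mul, hcsum, one_mul]
    rw [hκ]
    exact h0 i Z hZ W hW
  intro y
  have hQ : ∀ Z ∈ k, ∀ W ∈ k, (∑ i, y i * killingForm ℝ L (π i Z) (π i W))
      = (∑ i, y i / c i) * killingForm ℝ L Z W := by
    intro Z hZ W hW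
    rw [Finset.sum_mul]
    refine Finset.sum_congr rfl fun i _ => ?_
    rw [hB i Z hZ W hW]
    ring
  refine ⟨hQ, fun h => ?_, fun h Z hZ W hW => by rw [hQ Z hZ W hW, h, zero_mul]⟩
  obtain ⟨Z, hZ, hZ0⟩ : ∃ Z ∈ k, Z ≠ 0 := by
    by_contra! hall
    exact hk ((LieSubalgebra.eq_bot_iff _).mpr hall)
  have h0 := h Z hZ Z hZ
  rw [hQ Z hZ Z hZ] at h0
  exact (mul_eq_zero.mp h0).resolve_right (hκneg Z hZ0).ne
end

section
/- With the aligned setup of the context: (a) each φ_j (j = 1,…,s−1) is injective and ad(k)-equivariant, i.e. [Z, φ_j(W)] = φ_j([Z,W]) for all Z,W ∈ k; (b) the subspaces p_1,…,p_s, φ_1(k),…,φ_{s−1}(k), k are pairwise g_b-orthogonal, each is invariant under ad(Z) for all Z ∈ k, and their direct sum is g; consequently p := p_1 ⊕ … ⊕ p_s ⊕ φ_1(k) ⊕ … ⊕ φ_{s−1}(k) is the g_b-orthogonal complement of k in g; (c) g_b(φ_j(Z), φ_j(W)) = −B_{s+j}·κ_g(Z,W) for all Z,W ∈ k and j = 1,…,s−1.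 -/
open scoped BigOperators

/-!
Everything rests on one identity (`aligned_killing`): for `Z, W ∈ k`,
`κ_{g_i}(Z_i, W_i) = κ_g(Z, W) / c_i`. The forms `c_i κ_{g_i}(Z_i, W_i)` on `k` do not depend on
`i`: on the center this is the hypothesis on `⟨·,·⟩_0`; on a simple ideal `k_j` the projection `π_i`
is injective, so it transports the Killing form of `k_j`; the mixed terms vanish because simple
ideals are perfect and commute with each other and with the center. Summing over `i` with
`Σ 1/c_i = 1` identifies the common form with `κ_g`.

Consequently, if the components of `X` and `Y` are `x_l Z_l` and `y_l W_l` with `Z, W ∈ k`, then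
`g_b(X, Y) = -(Σ_l (z_l / c_l) x_l y_l) κ_g(Z, W)`. The orthogonality of the `φ_j(k)` and `k`, and
the norm formula with `B_{s+j}`, thus reduce to weighted inner products of the coefficient rows
`(1, …, 1, A_{s+j}, 0, …, 0)` and `(1, …, 1)`, where `A_{s+j}` is exactly the Gram–Schmidt
constant.

For the decomposition of `g`, project each `X_i` orthogonally onto `π_i(k)`; the remainder lies in
`p_i`, and each `π_i(k)` lies in `φ_1(k) + … + φ_{s-1}(k) + k`, since descending on `j` the
partial sums `Z_1 + … + Z_j` can be solved for from `φ_j(Z)` and `Z_1 + … + Z_{j+1}`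
(because `A_{s+j} ≠ 1`).
-/

/-! ### Killing forms of ideals and simple subalgebras -/

/-- The Killing form of an ideal, given here as a bracket-absorbing subalgebra, is the restriction
of the ambient Killing form. -/
lemma killing_of_absorbing {L : Type} [LieRing L] [LieAlgebra ℝ L] [FiniteDimensional ℝ L]
    (K : LieSubalgebra ℝ L) (hK : ∀ X Y : L, Y ∈ K → ⁅X, Y⁆ ∈ K) (x y : K) :
    killingForm ℝ K x y = killingForm ℝ L x y := by
  obtain ⟨I, rfl⟩ := K.exists_lieIdeal_coe_eq_iff.mpr hK
  exact congrArg (fun b : LinearMap.BilinForm ℝ I => b x y) (LieIdeal.killingForm_eq ℝ L I)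

/-- A simple Lie algebra is perfect, so a linear functional that kills all brackets vanishes. -/
lemma functional_eq_zero_of_simple {S : Type} [LieRing S] [LieAlgebra ℝ S]
    (hS : LieAlgebra.IsSimple ℝ S) (l : S →ₗ[ℝ] ℝ) (hl : ∀ x y : S, l ⁅x, y⁆ = 0) (x : S) :
    l x = 0 := by
  rcases hS.eq_bot_or_eq_top ⁅(⊤ : LieIdeal ℝ S), (⊤ : LieIdeal ℝ S)⁆ with h | h
  · refine absurd ⟨fun x y => ?_⟩ hS.non_abelian
    have : ⁅x, y⁆ ∈ ⁅(⊤ : LieIdeal ℝ S), (⊤ : LieIdeal ℝ S)⁆ :=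
      LieSubmodule.lie_mem_lie trivial trivial
    rw [h] at this
    simpa using this
  · have hx : x ∈ (⁅(⊤ : LieIdeal ℝ S), (⊤ : LieIdeal ℝ S)⁆ : LieIdeal ℝ S).toSubmodule := by
      rw [h]; trivial
    rw [LieSubmodule.lieIdeal_oper_eq_linear_span'] at hx
    have hle : Submodule.span ℝ
        {⁅u, v⁆ | (u ∈ (⊤ : LieIdeal ℝ S)) (v ∈ (⊤ : LieIdeal ℝ S))} ≤ LinearMap.ker l := by
      rw [Submodule.span_le]
      rintro _ ⟨u, -, v, -, rfl⟩
      exact hl u v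
    exact hle hx

/-- A Lie algebra endomorphism with nonzero image on a simple subalgebra `S` is injective on `S`,
hence carries the Killing form of `S` to that of the image. -/
lemma killing_simple_image {L : Type} [LieRing L] [LieAlgebra ℝ L]
    (p : L →ₗ[ℝ] L) (hp : ∀ x y, p ⁅x, y⁆ = ⁅p x, p y⁆) (S T : LieSubalgebra ℝ L)
    (hS : LieAlgebra.IsSimple ℝ S) (hT : (T : Set L) = p '' (S : Set L)) (hne : T ≠ ⊥)
    (x y : L) (hx : x ∈ S) (hy : y ∈ S) (hpx : p x ∈ T) (hpy : p y ∈ T) :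
    killingForm ℝ T ⟨p x, hpx⟩ ⟨p y, hpy⟩ = killingForm ℝ S ⟨x, hx⟩ ⟨y, hy⟩ := by
  have hmem : ∀ u : S, p u ∈ T := fun u => by
    have : p u ∈ (T : Set L) := by rw [hT]; exact ⟨u, u.2, rfl⟩
    exact this
  let f : S →ₗ⁅ℝ⁆ T :=
    { toFun := fun u => ⟨p u, hmem u⟩
      map_add' := fun u v => Subtype.ext (by simp)
      map_smul' := fun r u => Subtype.ext (by simp)
      map_lie' := fun {u v} => Subtype.ext (by simp [hp]) }
  have hsurj : Function.Surjective f := by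
    rintro ⟨v, hv⟩
    have hv' : v ∈ (T : Set L) := hv
    rw [hT] at hv'
    obtain ⟨u, hu, rfl⟩ := hv'
    exact ⟨⟨u, hu⟩, rfl⟩
  have hinj : Function.Injective f := by
    rcases hS.eq_bot_or_eq_top f.ker with h | h
    · exact f.ker_eq_bot.mp h
    · refine absurd ?_ hne
      rw [LieSubalgebra.eq_bot_iff]
      intro v hv
      obtain ⟨u, hu⟩ := hsurj ⟨v, hv⟩
      have : u ∈ f.ker := by rw [h]; trivial
      rw [LieHom.mem_ker, hu] at this
      exact congrArg Subtype.val this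
  exact LieAlgebra.killingForm_of_equiv_apply (LieEquiv.ofBijective f ⟨hinj, hsurj⟩)
    ⟨x, hx⟩ ⟨y, hy⟩

/-- A simple subalgebra `S` that meets `T` in an ideal of `S` is contained in `T` or meets it
trivially. -/
lemma simple_le_or_disjoint {L : Type} [LieRing L] [LieAlgebra ℝ L] (S T : LieSubalgebra ℝ L)
    (hS : LieAlgebra.IsSimple ℝ S) (h : ∀ x ∈ S, ∀ y ∈ T, ⁅x, y⁆ ∈ T) :
    (∀ x ∈ S, x ∈ T) ∨ ∀ x ∈ S, x ∈ T → x = 0 := by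
  let I : LieIdeal ℝ S :=
    { T.toSubmodule.comap (S.toSubmodule.subtype) with
      lie_mem := fun {x y} hy => h x x.2 y hy }
  rcases hS.eq_bot_or_eq_top I with hI | hI
  · right
    intro x hx hxT
    have : (⟨x, hx⟩ : S) ∈ I := hxT
    rw [hI, LieSubmodule.mem_bot] at this
    exact congrArg Subtype.val this
  · left
    intro x hx
    have : (⟨x, hx⟩ : S) ∈ I := by rw [hI]; trivial
    exact this

/-! ### Orthogonal projection -/

/-- Orthogonal projection onto a subspace with respect to a negative definite symmetric form. -/
lemma exists_orthogonal_decomp {L : Type} [AddCommGroup L] [Module ℝ L] [FiniteDimensional ℝ L]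
    (κ : LinearMap.BilinForm ℝ L) (hsymm : ∀ x y, κ x y = κ y x)
    (hneg : ∀ x, x ≠ 0 → κ x x < 0) (V : Submodule ℝ L) (x : L) :
    ∃ v ∈ V, ∀ w ∈ V, κ (x - v) w = 0 := by
  have hrefl : κ.IsRefl := fun a b hab => by rw [hsymm, hab]
  have hc := (LinearMap.BilinForm.isCompl_orthogonal_iff_disjoint (W := V) hrefl).mpr (by
    rw [Submodule.disjoint_def]
    intro a ha ha'
    by_contra hne
    exact (hneg a hne).ne (ha' a ha))
  obtain ⟨v, hv, u, hu, rfl⟩ := Submodule.mem_sup.mp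
    (hc.sup_eq_top ▸ Submodule.mem_top : x ∈ V ⊔ κ.orthogonal V)
  refine ⟨v, hv, fun w hw => ?_⟩
  rw [add_sub_cancel_left, hsymm]
  exact hu w hw

/-! ### Projections onto a family of complementary ideals -/

lemma proj_lie {L : Type} [LieRing L] [LieAlgebra ℝ L] {n : ℕ}
    (K : Fin n → LieSubalgebra ℝ L)
    (hKideal : ∀ (i : Fin n) (X Y : L), Y ∈ K i → ⁅X, Y⁆ ∈ K i)
    (π : Fin n → (L →ₗ[ℝ] L))
    (hπmem : ∀ i X, π i X ∈ K i)
    (hπsum : ∀ X : L, ∑ i, π i X = X)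
    (hπid : ∀ i X, X ∈ K i → π i X = X)
    (hπzero : ∀ i j, i ≠ j → ∀ X, X ∈ K i → π j X = 0) (i : Fin n) (X Y : L) :
    ⁅X, π i Y⁆ = π i ⁅X, Y⁆ := by
  conv_rhs => rw [← hπsum Y, lie_sum, map_sum]
  rw [Finset.sum_eq_single i]
  · rw [hπid i _ (hKideal i X _ (hπmem i Y))]
  · intro j _ hj
    exact hπzero j i hj _ (hKideal j X _ (hπmem j Y))
  · simp

lemma proj_hom {L : Type} [LieRing L] [LieAlgebra ℝ L] {n : ℕ}
    (K : Fin n → LieSubalgebra ℝ L)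
    (π : Fin n → (L →ₗ[ℝ] L))
    (hπmem : ∀ i X, π i X ∈ K i)
    (hπid : ∀ i X, X ∈ K i → π i X = X)
    (hlie : ∀ i (X Y : L), ⁅X, π i Y⁆ = π i ⁅X, Y⁆) (i : Fin n) (X Y : L) :
    π i ⁅X, Y⁆ = ⁅π i X, π i Y⁆ := by
  rw [hlie, ← lie_skew (π i X) Y, hlie, map_neg, hπid i _ (hπmem i _), ← map_neg, lie_skew]

/-- Distinct ideals of the family commute, hence are orthogonal for the Killing form. -/
lemma killing_eq_zero_of_ne {L : Type} [LieRing L] [LieAlgebra ℝ L] {n : ℕ}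
    (K : Fin n → LieSubalgebra ℝ L)
    (hKideal : ∀ (i : Fin n) (X Y : L), Y ∈ K i → ⁅X, Y⁆ ∈ K i)
    (π : Fin n → (L →ₗ[ℝ] L))
    (hπid : ∀ i X, X ∈ K i → π i X = X)
    (hπzero : ∀ i j, i ≠ j → ∀ X, X ∈ K i → π j X = 0)
    (i j : Fin n) (hij : i ≠ j) (X Y : L) (hX : X ∈ K i) (hY : Y ∈ K j) :
    killingForm ℝ L X Y = 0 := by
  have h0 : LieAlgebra.ad ℝ L X ∘ₗ LieAlgebra.ad ℝ L Y = 0 := by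
    ext W
    have h1 : ⁅X, ⁅Y, W⁆⁆ ∈ K j := by
      refine hKideal j _ _ ?_
      rw [← lie_skew]
      exact neg_mem (hKideal j _ _ hY)
    have h2 : ⁅X, ⁅Y, W⁆⁆ ∈ K i := by
      rw [← lie_skew]
      exact neg_mem (hKideal i _ _ hX)
    have h3 : ⁅X, ⁅Y, W⁆⁆ = 0 := by
      rw [← hπid j _ h1]
      exact hπzero i j hij _ h2
    simpa using h3
  rw [killingForm_apply_apply, h0, map_zero]

/-! ### The alignment identity -/

/-- The content of alignment: all the forms `c_i κ_{g_i}(Z_i, W_i)` on `k` agree, and equal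
`κ_g(Z, W)`. They agree on the center by hypothesis, on each simple ideal `k_j` because `π_i` is
injective there, and the mixed terms vanish because simple ideals are perfect. -/
lemma aligned_killing
    {L : Type} [LieRing L] [LieAlgebra ℝ L] [FiniteDimensional ℝ L]
    {n : ℕ}
    (K : Fin n → LieSubalgebra ℝ L)
    (hKideal : ∀ (i : Fin n) (X Y : L), Y ∈ K i → ⁅X, Y⁆ ∈ K i)
    (π : Fin n → (L →ₗ[ℝ] L))
    (hπmem : ∀ i X, π i X ∈ K i)
    (hπsum : ∀ X : L, ∑ i, π i X = X)
    (hπid : ∀ i X, X ∈ K i → π i X = X)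
    (hπzero : ∀ i j, i ≠ j → ∀ X, X ∈ K i → π j X = 0)
    (k : LieSubalgebra ℝ L)
    (k₀ : LieSubalgebra ℝ L)
    (hk₀ : ∀ W : L, W ∈ k₀ ↔ (W ∈ k ∧ ∀ Z ∈ k, ⁅Z, W⁆ = 0))
    {t : ℕ} (kj : Fin t → LieSubalgebra ℝ L)
    (hkjsub : ∀ j, (kj j : Set L) ⊆ (k : Set L))
    (hkjideal : ∀ (j : Fin t) (Z W : L), Z ∈ k → W ∈ kj j → ⁅Z, W⁆ ∈ kj j)
    (hkjsimple : ∀ j, LieAlgebra.IsSimple ℝ ↥(kj j))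
    (hkdecomp : ∀ Z ∈ k, ∃ (Z₀ : L) (f : Fin t → L),
      Z₀ ∈ k₀ ∧ (∀ j, f j ∈ kj j) ∧ Z = Z₀ + ∑ j, f j)
    (c : Fin n → ℝ) (hcpos : ∀ i, 0 < c i)
    (lam : Fin t → ℝ) (hlam : ∀ j, 0 < lam j)
    (P : Fin n → Fin t → LieSubalgebra ℝ L)
    (hPset : ∀ i j, (P i j : Set L) = (π i) '' (kj j : Set L))
    (hPK : ∀ i j (U : L), U ∈ P i j → U ∈ K i)
    (hPne : ∀ i j, P i j ≠ ⊥)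
    (hkilling : ∀ i j (U V : ↥(P i j)),
      killingForm ℝ ↥(P i j) U V
        = (lam j * c i) * killingForm ℝ ↥(K i) ⟨(U : L), hPK i j U U.2⟩ ⟨(V : L), hPK i j V V.2⟩)
    (ip0 : LinearMap.BilinForm ℝ L)
    (hip0 : ∀ (i : Fin n), ∀ Z ∈ k₀, ∀ W ∈ k₀,
      killingForm ℝ ↥(K i) ⟨π i Z, hπmem i Z⟩ ⟨π i W, hπmem i W⟩ = -(1 / c i) * ip0 Z W)
    (hcsum : ∑ i, 1 / c i = 1) (i : Fin n) (Z W : L) (hZ : Z ∈ k) (hW : W ∈ k) :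
    killingForm ℝ L (π i Z) (π i W) = killingForm ℝ L Z W / c i := by
  have hlie := proj_lie K hKideal π hπmem hπsum hπid hπzero
  have hhom := proj_hom K π hπmem hπid hlie
  let Q : Fin n → LinearMap.BilinForm ℝ L := fun i =>
    c i • (killingForm ℝ L).compl₁₂ (π i) (π i)
  have hQ : ∀ i X Y, Q i X Y = c i * killingForm ℝ L (π i X) (π i Y) := fun i X Y => by
    simp [Q]
  have hQsymm : ∀ i X Y, Q i X Y = Q i Y X := fun i X Y => by
    rw [hQ, hQ, LieModule.traceForm_comm]
  have h00 : ∀ i, ∀ X ∈ k₀, ∀ Y ∈ k₀, Q i X Y = - ip0 X Y := by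
    intro i X hX Y hY
    have h := hip0 i X hX Y hY
    rw [killing_of_absorbing (K i) (hKideal i)] at h
    rw [hQ]
    have := (hcpos i).ne'
    change killingForm ℝ L (π i X) (π i Y) = _ at h
    rw [h]
    field_simp
  have hjj : ∀ i j X (hX : X ∈ kj j) Y (hY : Y ∈ kj j),
      Q i X Y = (lam j)⁻¹ * killingForm ℝ (kj j) ⟨X, hX⟩ ⟨Y, hY⟩ := by
    intro i j X hX Y hY
    have hm : ∀ U ∈ kj j, π i U ∈ P i j := fun U hU => by
      have : π i U ∈ (P i j : Set L) := by rw [hPset]; exact ⟨U, hU, rfl⟩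
      exact this
    have h := hkilling i j ⟨π i X, hm X hX⟩ ⟨π i Y, hm Y hY⟩
    rw [killing_of_absorbing (K i) (hKideal i),
      killing_simple_image (π i) (hhom i) (kj j) (P i j) (hkjsimple j) (hPset i j) (hPne i j)
        X Y hX hY] at h
    rw [hQ, h]
    have := (hlam j).ne'
    field_simp
  -- a simple ideal is `Q i`-orthogonal to everything that commutes with it
  have hcomm : ∀ i j Y, (∀ X ∈ kj j, ⁅X, Y⁆ = 0) → ∀ X ∈ kj j, Q i X Y = 0 := by
    intro i j Y hY X hX
    refine functional_eq_zero_of_simple (hkjsimple j)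
      (((Q i).flip Y) ∘ₗ (kj j).toSubmodule.subtype) ?_ ⟨X, hX⟩
    intro u v
    change Q i ⁅(u : L), (v : L)⁆ Y = 0
    rw [hQ, hhom, LieModule.traceForm_apply_lie_apply, ← hhom, hY v v.2]
    simp
  have hjl : ∀ i i' j l, ∀ X ∈ kj j, ∀ Y ∈ kj l, Q i X Y = Q i' X Y := by
    intro i i' j l X hX Y hY
    have hjl1 : ∀ x ∈ kj j, ∀ y ∈ kj l, ⁅x, y⁆ ∈ kj l := fun x hx y hy =>
      hkjideal l x y (hkjsub j hx) hy
    have hjl2 : ∀ x ∈ kj j, ∀ y ∈ kj l, ⁅x, y⁆ ∈ kj j := fun x hx y hy => by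
      rw [← lie_skew]
      exact neg_mem (hkjideal j y x (hkjsub l hy) hx)
    rcases simple_le_or_disjoint (kj j) (kj l) (hkjsimple j) hjl1 with h | h
    · rcases simple_le_or_disjoint (kj l) (kj j) (hkjsimple l)
        (fun x hx y hy => hkjideal j x y (hkjsub l hx) hy) with h' | h'
      · rw [hjj i j X hX Y (h' Y hY), hjj i' j X hX Y (h' Y hY)]
      · have := h' X (h X hX) hX
        simp [this]
    · have h0 : ∀ x ∈ kj j, ⁅x, Y⁆ = 0 := fun x hx => h _ (hjl2 x hx Y hY) (hjl1 x hx Y hY)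
      rw [hcomm i j Y h0 X hX, hcomm i' j Y h0 X hX]
  have hj0 : ∀ i j, ∀ X ∈ kj j, ∀ Y ∈ k₀, Q i X Y = 0 := fun i j X hX Y hY =>
    hcomm i j Y (fun U hU => ((hk₀ Y).mp hY).2 U (hkjsub j hU)) X hX
  have hindep : ∀ i', Q i' Z W = Q i Z W := by
    intro i'
    obtain ⟨Z₀, f, hZ₀, hf, rfl⟩ := hkdecomp Z hZ
    obtain ⟨W₀, g, hW₀, hg, rfl⟩ := hkdecomp W hW
    have e1 : Q i' Z₀ W₀ = Q i Z₀ W₀ := by rw [h00 i' _ hZ₀ _ hW₀, h00 i _ hZ₀ _ hW₀]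
    have e2 : ∀ i l, Q i (f l) W₀ = 0 := fun i l => hj0 i l _ (hf l) _ hW₀
    have e3 : ∀ i l, Q i Z₀ (g l) = 0 := fun i l => by
      rw [hQsymm]; exact hj0 i l _ (hg l) _ hZ₀
    have e4 : ∀ j l, Q i' (f j) (g l) = Q i (f j) (g l) := fun j l =>
      hjl i' i j l _ (hf j) _ (hg l)
    simp only [map_add, map_sum, LinearMap.add_apply, LinearMap.sum_apply, e1, e2, e3, e4]
  have hsum : killingForm ℝ L Z W = ∑ l, killingForm ℝ L (π l Z) (π l W) := by
    conv_lhs => rw [← hπsum Z, ← hπsum W]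
    simp only [map_sum, LinearMap.sum_apply]
    refine Finset.sum_congr rfl fun l _ => Finset.sum_eq_single l (fun b _ hb => ?_) (by simp)
    exact killing_eq_zero_of_ne K hKideal π hπid hπzero _ _ hb _ _ (hπmem _ _) (hπmem _ _)
  have hκ : killingForm ℝ L Z W = Q i Z W := by
    rw [hsum, ← one_mul (Q i Z W), ← hcsum, Finset.sum_mul]
    refine Finset.sum_congr rfl fun l _ => ?_
    rw [← hindep l, hQ]
    have := (hcpos l).ne'
    field_simp
  rw [hκ, hQ]
  have := (hcpos i).ne'
  field_simp

/-! ### The decomposition -/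

/-- Aligned setup (`s = m + 1`), with bi-invariant metric
`g_b = -Σ z_i κ_{g_i}(·_i,·_i)`,
`A_{s+j} = -(c_{j+1}/z_{j+1})(z_1/c_1 + … + z_j/c_j)`,
`B_{s+j} = z_1/c_1 + … + z_j/c_j + A_{s+j}² z_{j+1}/c_{j+1}`,
`φ_j(Z) = (Z_1, …, Z_j, A_{s+j} Z_{j+1}, 0, …, 0)`, and
`p_i = {X ∈ g_i : κ_{g_i}(X, π_i(k)) = 0}`.  Then:
(a) each `φ_j` is injective on `k` and `ad(k)`-equivariant;
(b) the subspaces `p_1, …, p_s, φ_1(k), …, φ_{s-1}(k), k` are pairwise `g_b`-orthogonal,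
`ad(k)`-invariant, and their direct sum is `g`; consequently
`p = p_1 ⊕ … ⊕ p_s ⊕ φ_1(k) ⊕ … ⊕ φ_{s-1}(k)` is the `g_b`-orthogonal complement of `k`;
(c) `g_b(φ_j(Z), φ_j(W)) = -B_{s+j}·κ_g(Z,W)` for all `Z, W ∈ k`. -/
theorem stmt_10
    {L : Type} [LieRing L] [LieAlgebra ℝ L] [FiniteDimensional ℝ L]
    (hκneg : ∀ X : L, X ≠ 0 → killingForm ℝ L X X < 0)
    {m : ℕ}
    (K : Fin (m + 1) → LieSubalgebra ℝ L)
    (hKideal : ∀ (i : Fin (m + 1)) (X Y : L), Y ∈ K i → ⁅X, Y⁆ ∈ K i)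
    (hKsimple : ∀ i, LieAlgebra.IsSimple ℝ ↥(K i))
    (π : Fin (m + 1) → (L →ₗ[ℝ] L))
    (hπmem : ∀ i X, π i X ∈ K i)
    (hπsum : ∀ X : L, ∑ i, π i X = X)
    (hπid : ∀ i X, X ∈ K i → π i X = X)
    (hπzero : ∀ i j, i ≠ j → ∀ X, X ∈ K i → π j X = 0)
    (k : LieSubalgebra ℝ L) (hk : k ≠ ⊥)
    (k₀ : LieSubalgebra ℝ L)
    (hk₀ : ∀ W : L, W ∈ k₀ ↔ (W ∈ k ∧ ∀ Z ∈ k, ⁅Z, W⁆ = 0))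
    {t : ℕ} (kj : Fin t → LieSubalgebra ℝ L)
    (hkjsub : ∀ j, (kj j : Set L) ⊆ (k : Set L))
    (hkjideal : ∀ (j : Fin t) (Z W : L), Z ∈ k → W ∈ kj j → ⁅Z, W⁆ ∈ kj j)
    (hkjsimple : ∀ j, LieAlgebra.IsSimple ℝ ↥(kj j))
    (hkdecomp : ∀ Z ∈ k, ∃ (Z₀ : L) (f : Fin t → L),
      Z₀ ∈ k₀ ∧ (∀ j, f j ∈ kj j) ∧ Z = Z₀ + ∑ j, f j)
    -- the aligned conditions
    (c : Fin (m + 1) → ℝ) (hcpos : ∀ i, 0 < c i)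
    (lam : Fin t → ℝ) (hlam : ∀ j, 0 < lam j)
    (P : Fin (m + 1) → Fin t → LieSubalgebra ℝ L)
    (hPset : ∀ i j, (P i j : Set L) = (π i) '' (kj j : Set L))
    (hPK : ∀ i j (U : L), U ∈ P i j → U ∈ K i)
    (hPne : ∀ i j, P i j ≠ ⊥)
    (hkilling : ∀ i j (U V : ↥(P i j)),
      killingForm ℝ ↥(P i j) U V
        = (lam j * c i) * killingForm ℝ ↥(K i) ⟨(U : L), hPK i j U U.2⟩ ⟨(V : L), hPK i j V V.2⟩)
    (ip0 : LinearMap.BilinForm ℝ L)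
    (hip0symm : ∀ Z W : L, ip0 Z W = ip0 W Z)
    (hip0pos : ∀ Z ∈ k₀, Z ≠ 0 → 0 < ip0 Z Z)
    (hip0 : ∀ (i : Fin (m + 1)), ∀ Z ∈ k₀, ∀ W ∈ k₀,
      killingForm ℝ ↥(K i) ⟨π i Z, hπmem i Z⟩ ⟨π i W, hπmem i W⟩ = -(1 / c i) * ip0 Z W)
    (hcsum : ∑ i, 1 / c i = 1)
    -- the bi-invariant metric g_b and the maps φ_j
    (z : Fin (m + 1) → ℝ) (hz : ∀ i, 0 < z i)
    (gb : LinearMap.BilinForm ℝ L)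
    (hgb : ∀ X Y : L, gb X Y
      = - ∑ i, z i * killingForm ℝ ↥(K i) ⟨π i X, hπmem i X⟩ ⟨π i Y, hπmem i Y⟩)
    (A : Fin m → ℝ)
    (hA : ∀ j : Fin m, A j = -(c j.succ / z j.succ)
      * ∑ l : Fin (m + 1), (if (l : ℕ) ≤ (j : ℕ) then z l / c l else 0))
    (B : Fin m → ℝ)
    (hB : ∀ j : Fin m, B j
      = (∑ l : Fin (m + 1), (if (l : ℕ) ≤ (j : ℕ) then z l / c l else 0))
        + (A j) ^ 2 * (z j.succ / c j.succ))
    (φ : Fin m → (L →ₗ[ℝ] L))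
    (hφ : ∀ (j : Fin m) (Z : L), φ j Z
      = (∑ l : Fin (m + 1), (if (l : ℕ) ≤ (j : ℕ) then π l Z else 0)) + A j • π j.succ Z) :
    -- (a) each φ_j is injective on k and ad(k)-equivariant
    (∀ j : Fin m,
      (∀ Z ∈ k, ∀ W ∈ k, φ j Z = φ j W → Z = W)
      ∧ (∀ Z ∈ k, ∀ W ∈ k, ⁅Z, φ j W⁆ = φ j ⁅Z, W⁆))
    ∧
    -- (b) pairwise g_b-orthogonality of p_1, …, p_s, φ_1(k), …, φ_{s-1}(k), k
    ((∀ i i' : Fin (m + 1), i ≠ i' → ∀ X Y : L,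
        (∃ hX : X ∈ K i, ∀ Z ∈ k,
          killingForm ℝ ↥(K i) ⟨X, hX⟩ ⟨π i Z, hπmem i Z⟩ = 0) →
        (∃ hY : Y ∈ K i', ∀ Z ∈ k,
          killingForm ℝ ↥(K i') ⟨Y, hY⟩ ⟨π i' Z, hπmem i' Z⟩ = 0) →
        gb X Y = 0)
      ∧ (∀ (i : Fin (m + 1)) (j : Fin m) (X : L),
          (∃ hX : X ∈ K i, ∀ Z ∈ k,
            killingForm ℝ ↥(K i) ⟨X, hX⟩ ⟨π i Z, hπmem i Z⟩ = 0) →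
          ∀ W ∈ k, gb X (φ j W) = 0)
      ∧ (∀ j j' : Fin m, j ≠ j' → ∀ Z ∈ k, ∀ W ∈ k, gb (φ j Z) (φ j' W) = 0)
      ∧ (∀ (i : Fin (m + 1)) (X : L),
          (∃ hX : X ∈ K i, ∀ Z ∈ k,
            killingForm ℝ ↥(K i) ⟨X, hX⟩ ⟨π i Z, hπmem i Z⟩ = 0) →
          ∀ Z ∈ k, gb X Z = 0)
      ∧ (∀ j : Fin m, ∀ W ∈ k, ∀ Z ∈ k, gb (φ j W) Z = 0))
    ∧
    -- (b) each subspace is ad(k)-invariant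
    ((∀ (i : Fin (m + 1)), ∀ Z ∈ k, ∀ X : L,
        (∃ hX : X ∈ K i, ∀ W ∈ k,
          killingForm ℝ ↥(K i) ⟨X, hX⟩ ⟨π i W, hπmem i W⟩ = 0) →
        (∃ hX' : ⁅Z, X⁆ ∈ K i, ∀ W ∈ k,
          killingForm ℝ ↥(K i) ⟨⁅Z, X⁆, hX'⟩ ⟨π i W, hπmem i W⟩ = 0))
      ∧ (∀ (j : Fin m), ∀ Z ∈ k, ∀ W ∈ k, ∃ W' ∈ k, ⁅Z, φ j W⁆ = φ j W'))
    ∧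
    -- (b) the direct sum of the subspaces is g
    (∀ X : L, ∃ (f : Fin (m + 1) → L) (w : Fin m → L) (Zk : L),
      (∀ i, ∃ hfi : f i ∈ K i, ∀ Z ∈ k,
        killingForm ℝ ↥(K i) ⟨f i, hfi⟩ ⟨π i Z, hπmem i Z⟩ = 0)
      ∧ (∀ j, w j ∈ k) ∧ Zk ∈ k
      ∧ X = (∑ i, f i) + (∑ j, φ j (w j)) + Zk)
    ∧
    -- (b) consequently p = p_1 ⊕ … ⊕ p_s ⊕ φ_1(k) ⊕ … ⊕ φ_{s-1}(k) is the
    -- g_b-orthogonal complement of k in g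
    (∀ X : L, (∀ Z ∈ k, gb X Z = 0) ↔
      ∃ (f : Fin (m + 1) → L) (w : Fin m → L),
        (∀ i, ∃ hfi : f i ∈ K i, ∀ Z ∈ k,
          killingForm ℝ ↥(K i) ⟨f i, hfi⟩ ⟨π i Z, hπmem i Z⟩ = 0)
        ∧ (∀ j, w j ∈ k)
        ∧ X = (∑ i, f i) + (∑ j, φ j (w j)))
    ∧
    -- (c) g_b(φ_j(Z), φ_j(W)) = -B_{s+j}·κ_g(Z,W)
    (∀ j : Fin m, ∀ Z ∈ k, ∀ W ∈ k,
      gb (φ j Z) (φ j W) = -(B j) * killingForm ℝ L Z W) := by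
  have hlie := proj_lie K hKideal π hπmem hπsum hπid hπzero
  have hκsymm : ∀ X Y : L, killingForm ℝ L X Y = killingForm ℝ L Y X := fun X Y =>
    LieModule.traceForm_comm ℝ L L X Y
  have hal := aligned_killing K hKideal π hπmem hπsum hπid hπzero k k₀ hk₀ kj hkjsub hkjideal
    hkjsimple hkdecomp c hcpos lam hlam P hPset hPK hPne hkilling ip0 hip0 hcsum
  -- every Killing form of an ideal becomes a restriction of the ambient one
  have hK : ∀ (i : Fin (m + 1)) (x y : K i), killingForm ℝ (K i) x y = killingForm ℝ L x y :=
    fun i => killing_of_absorbing (K i) (hKideal i)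
  simp only [hK] at hgb ⊢
  clear hK
  have hππ : ∀ i j X, π i (π j X) = if i = j then π j X else 0 := by
    intro i j X
    split_ifs with h
    · rw [h]; exact hπid j _ (hπmem j X)
    · exact hπzero j i (Ne.symm h) _ (hπmem j X)
  have hgbsymm : ∀ X Y, gb X Y = gb Y X := by
    intro X Y
    rw [hgb, hgb]
    simp only [hκsymm (π _ X)]
  -- `φ j` acts on the `l`-th component as the scalar `a j l`
  let a : Fin m → Fin (m + 1) → ℝ := fun j l =>
    (if (l : ℕ) ≤ (j : ℕ) then 1 else 0) + (if l = j.succ then A j else 0)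
  have hπφ : ∀ j l Z, π l (φ j Z) = a j l • π l Z := by
    intro j l Z
    have h1 : ∀ x : Fin (m + 1), π l (if (x : ℕ) ≤ (j : ℕ) then π x Z else 0)
        = if l = x then (if (l : ℕ) ≤ (j : ℕ) then π l Z else 0) else 0 := by
      intro x
      by_cases hlx : l = x
      · subst hlx
        rw [if_pos rfl]
        split_ifs <;> simp [hππ]
      · split_ifs <;> simp [hππ, hlx]
    rw [hφ, map_add, map_sum, map_smul, Finset.sum_congr rfl fun x _ => h1 x, hππ]
    simp only [Finset.sum_ite_eq, Finset.mem_univ, if_true, a, add_smul, ite_smul, one_smul,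
      zero_smul]
    congr 1
    split_ifs with h
    · rw [h]
    · simp
  have hgbscal : ∀ (x y : Fin (m + 1) → ℝ) (X Y Z W : L), Z ∈ k → W ∈ k →
      (∀ l, π l X = x l • π l Z) → (∀ l, π l Y = y l • π l W) →
      gb X Y = -(∑ l, z l / c l * x l * y l) * killingForm ℝ L Z W := by
    intro x y X Y Z W hZ hW hX hY
    rw [hgb, neg_mul, Finset.sum_mul]
    congr 1
    refine Finset.sum_congr rfl fun l _ => ?_
    simp only [hX, hY, map_smul, LinearMap.smul_apply, smul_eq_mul, hal l Z W hZ hW]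
    ring
  have hsuma : ∀ j (h : Fin (m + 1) → ℝ), ∑ l, z l / c l * a j l * h l
      = (∑ l : Fin (m + 1), (if (l : ℕ) ≤ (j : ℕ) then z l / c l * h l else 0))
        + A j * (z j.succ / c j.succ) * h j.succ := by
    intro j h
    simp only [a, mul_add, add_mul, Finset.sum_add_distrib, mul_ite, ite_mul, mul_one, mul_zero,
      zero_mul, Finset.sum_ite_eq', Finset.mem_univ, if_true]
    ring
  have hAz : ∀ j, A j * (z j.succ / c j.succ)
      = -∑ l : Fin (m + 1), (if (l : ℕ) ≤ (j : ℕ) then z l / c l else 0) := by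
    intro j
    rw [hA]
    have := (hcpos j.succ).ne'
    have := (hz j.succ).ne'
    field_simp
  -- the choice of `A j` makes row `j` of `a` orthogonal to any row starting with `j + 2` ones
  have hortho : ∀ (j : Fin m) (h : Fin (m + 1) → ℝ), (∀ l : Fin (m + 1), (l : ℕ) ≤ (j : ℕ) + 1 → h l = 1) →
      ∑ l, z l / c l * a j l * h l = 0 := by
    intro j h hh
    rw [hsuma, hAz, hh j.succ (by simp), mul_one, ← sub_eq_add_neg, sub_eq_zero]
    refine Finset.sum_congr rfl fun l _ => ?_
    split_ifs with hl
    · rw [hh l (by omega), mul_one]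
    · rfl
  have haone : ∀ (j : Fin m) (l : Fin (m + 1)), (l : ℕ) ≤ j → a j l = 1 := by
    intro j l hl
    have : l ≠ j.succ := fun h => by
      rw [h, Fin.val_succ] at hl
      omega
    simp [a, hl, this]
  have hzero : ∀ X, killingForm ℝ L X X = 0 → X = 0 := fun X hX => by
    by_contra hne
    exact (hκneg X hne).ne hX
  have hA_lt_one : ∀ j, A j < 1 := by
    intro j
    rw [hA, neg_mul]
    have h1 : 0 ≤ c j.succ / z j.succ := (div_pos (hcpos _) (hz _)).le
    have h2 : 0 ≤ ∑ l : Fin (m + 1), (if (l : ℕ) ≤ (j : ℕ) then z l / c l else 0) :=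
      Finset.sum_nonneg fun l _ => by
        split_ifs
        · exact (div_pos (hz _) (hcpos _)).le
        · exact le_rfl
    nlinarith [mul_nonneg h1 h2]
  have hequiv : ∀ (j : Fin m) (Z W : L), ⁅Z, φ j W⁆ = φ j ⁅Z, W⁆ := by
    intro j Z W
    rw [hφ, hφ, lie_add, lie_sum, lie_smul, hlie]
    congr 1
    refine Finset.sum_congr rfl fun l _ => ?_
    split_ifs
    · exact hlie _ _ _
    · simp
  -- elements of `p_i` are `g_b`-orthogonal to everything with components proportional to
  -- those of an element of `k`
  have hpk : ∀ i X, X ∈ K i → (∀ Z ∈ k, killingForm ℝ L X (π i Z) = 0) →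
      ∀ (y : Fin (m + 1) → ℝ) (Y W : L), W ∈ k → (∀ l, π l Y = y l • π l W) → gb X Y = 0 := by
    intro i X hX hXk y Y W hW hY
    rw [hgb, neg_eq_zero]
    refine Finset.sum_eq_zero fun l _ => ?_
    simp only [hY, map_smul, smul_eq_mul]
    by_cases hl : i = l
    · subst hl
      rw [hπid i X hX, hXk W hW]; simp
    · rw [hπzero i l hl X hX]; simp
  have o2 : ∀ (i : Fin (m + 1)) (j : Fin m) (X : L),
      (∃ _ : X ∈ K i, ∀ Z ∈ k, killingForm ℝ L X (π i Z) = 0) →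
      ∀ W ∈ k, gb X (φ j W) = 0 := by
    rintro i j X ⟨hX, hXk⟩ W hW
    exact hpk i X hX hXk (a j) _ W hW (fun l => hπφ j l W)
  have o4 : ∀ (i : Fin (m + 1)) (X : L),
      (∃ _ : X ∈ K i, ∀ Z ∈ k, killingForm ℝ L X (π i Z) = 0) →
      ∀ Z ∈ k, gb X Z = 0 := by
    rintro i X ⟨hX, hXk⟩ W hW
    exact hpk i X hX hXk (fun _ => 1) _ W hW (fun l => (one_smul _ _).symm)
  have o5 : ∀ j : Fin m, ∀ W ∈ k, ∀ Z ∈ k, gb (φ j W) Z = 0 := by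
    intro j W hW Z hZ
    rw [hgbscal (a j) (fun _ => 1) _ _ W Z hW hZ (fun l => hπφ j l W)
      (fun l => (one_smul _ _).symm), hortho j _ (fun _ _ => rfl)]
    simp
  have o3lt : ∀ j j' : Fin m, j < j' → ∀ Z ∈ k, ∀ W ∈ k, gb (φ j Z) (φ j' W) = 0 := by
    intro j j' hjj Z hZ W hW
    rw [hgbscal (a j) (a j') _ _ Z W hZ hW (fun l => hπφ j l Z) (fun l => hπφ j' l W),
      hortho j _ (fun l hl => haone j' l (by have : (j : ℕ) < j' := hjj; omega))]
    simp
  have hdecomp : ∀ X : L, ∃ (f : Fin (m + 1) → L) (w : Fin m → L) (Zk : L),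
      (∀ i, ∃ _ : f i ∈ K i, ∀ Z ∈ k, killingForm ℝ L (f i) (π i Z) = 0)
      ∧ (∀ j, w j ∈ k) ∧ Zk ∈ k
      ∧ X = (∑ i, f i) + (∑ j, φ j (w j)) + Zk := by
    -- the span of `φ_1(k), …, φ_{s-1}(k), k`
    let V : Submodule ℝ L :=
      { carrier := {X | ∃ (w : Fin m → L) (Zk : L), (∀ j, w j ∈ k) ∧ Zk ∈ k
          ∧ X = (∑ j, φ j (w j)) + Zk}
        zero_mem' := ⟨0, 0, fun _ => k.zero_mem, k.zero_mem, by simp⟩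
        add_mem' := by
          rintro _ _ ⟨w, Y, hw, hY, rfl⟩ ⟨w', Y', hw', hY', rfl⟩
          refine ⟨w + w', Y + Y', fun j => k.add_mem (hw j) (hw' j), k.add_mem hY hY', ?_⟩
          simp only [Pi.add_apply, map_add, Finset.sum_add_distrib]
          abel
        smul_mem' := by
          rintro r _ ⟨w, Y, hw, hY, rfl⟩
          refine ⟨r • w, r • Y, fun j => k.smul_mem r (hw j), k.smul_mem r hY, ?_⟩
          simp only [Pi.smul_apply, map_smul, smul_add, Finset.smul_sum] }
    -- partial sums `Z_1 + … + Z_{j+1}`; solving for the shorter one uses `A j ≠ 1`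
    let S : ℕ → L → L := fun j u =>
      ∑ l : Fin (m + 1), (if (l : ℕ) ≤ j then π l u else 0)
    have hSsucc : ∀ (j : Fin m) u, S (j + 1) u = S j u + π j.succ u := by
      intro j u
      have h1 : π j.succ u = ∑ l : Fin (m + 1), if l = j.succ then π l u else 0 := by simp
      rw [h1]
      simp only [S]
      rw [← Finset.sum_add_distrib]
      refine Finset.sum_congr rfl fun l _ => ?_
      have h2 : l = j.succ ↔ (l : ℕ) = j + 1 := by rw [Fin.ext_iff, Fin.val_succ]
      rcases lt_trichotomy (l : ℕ) (j + 1) with h | h | h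
      · have h3 : (l : ℕ) ≤ j := by omega
        have h4 : l ≠ j.succ := fun h => by rw [h2] at h; omega
        simp [h3, h4, h.le]
      · have h3 : ¬ (l : ℕ) ≤ j := by omega
        simp [h2.mpr h]
      · have h3 : ¬ (l : ℕ) ≤ j := by omega
        have h4 : l ≠ j.succ := fun h => by rw [h2] at h; omega
        have h5 : ¬ (l : ℕ) ≤ j + 1 := by omega
        simp [h3, h4, h5]
    have hφV : ∀ j, ∀ u ∈ k, φ j u ∈ V := by
      intro j u hu
      refine ⟨Pi.single j u, 0, fun i => ?_, k.zero_mem, ?_⟩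
      · by_cases h : i = j
        · subst h; simpa using hu
        · simp [h]
      · rw [Finset.sum_eq_single j (fun b _ hb => by simp [hb]) (by simp)]
        simp
    have hSV : ∀ d ≤ m, ∀ u ∈ k, S (m - d) u ∈ V := by
      intro d
      induction d with
      | zero =>
        intro _ u hu
        have : S (m - 0) u = u := by
          simp only [S]
          conv_rhs => rw [← hπsum u]
          exact Finset.sum_congr rfl fun l _ => if_pos (by omega)
        rw [this]
        exact ⟨0, u, fun _ => k.zero_mem, hu, by simp⟩
      | succ d ih =>
        intro hd u hu
        have hlt : m - (d + 1) < m := by omega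
        let j : Fin m := ⟨m - (d + 1), hlt⟩
        have h1 := ih (by omega) u hu
        have h2 : m - d = (j : ℕ) + 1 := by simp only [j]; omega
        rw [h2, hSsucc] at h1
        have h3 : φ j u = S j u + A j • π j.succ u := hφ j u
        have h4 : S j u = (1 - A j)⁻¹ • (φ j u - A j • (S j u + π j.succ u)) := by
          have : 1 - A j ≠ 0 := (sub_pos.mpr (hA_lt_one j)).ne'
          rw [eq_inv_smul_iff₀ this, h3]
          module
        change S j u ∈ V
        rw [h4]
        exact V.smul_mem _ (V.sub_mem (hφV j u hu) (V.smul_mem _ h1))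
    have hSV' : ∀ j ≤ m, ∀ u ∈ k, S j u ∈ V := fun j hj u hu => by
      have := hSV (m - j) (by omega) u hu
      rwa [show m - (m - j) = j by omega] at this
    have hπV : ∀ l, ∀ u ∈ k, π l u ∈ V := by
      intro l u hu
      refine Fin.cases ?_ (fun j => ?_) l
      · have h0 := hSV' 0 (by omega) u hu
        have : S 0 u = π 0 u := by
          simp only [S]
          rw [Finset.sum_eq_single 0]
          · simp
          · intro b _ hb
            exact if_neg fun h => hb (Fin.ext (by simpa using h))
          · simp
        rwa [this] at h0
      · have h0 := hSV' (j + 1) (by omega) u hu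
        rw [hSsucc] at h0
        have h1 := hSV' j (by omega) u hu
        simpa using V.sub_mem h0 h1
    intro X
    have hproj : ∀ i, ∃ u ∈ k, ∀ Z ∈ k, killingForm ℝ L (π i X - π i u) (π i Z) = 0 := by
      intro i
      obtain ⟨v, ⟨u, hu, rfl⟩, hv⟩ := exists_orthogonal_decomp (killingForm ℝ L) hκsymm hκneg
        (k.toSubmodule.map (π i)) (π i X)
      exact ⟨u, hu, fun Z hZ => hv _ ⟨Z, hZ, rfl⟩⟩
    choose u hu huk using hproj
    have hV : ∑ i, π i (u i) ∈ V := V.sum_mem fun i _ => hπV i _ (hu i)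
    obtain ⟨w, Zk, hw, hZk, hwZ⟩ := hV
    refine ⟨fun i => π i X - π i (u i), w, Zk,
      fun i => ⟨sub_mem (hπmem i X) (hπmem i _), huk i⟩, hw, hZk, ?_⟩
    rw [Finset.sum_sub_distrib, hπsum, hwZ]
    abel
  refine ⟨fun j => ⟨fun Z hZ W hW h => ?_, fun Z _ W _ => hequiv j Z W⟩,
    ⟨?_, o2, ?_, o4, o5⟩, ⟨?_, fun j Z hZ W hW => ⟨⁅Z, W⁆, k.lie_mem hZ hW, hequiv j Z W⟩⟩,
    hdecomp, ?_, ?_⟩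
  · have h0 : π 0 Z = π 0 W := by
      have h1 := congrArg (π 0) h
      simpa [hπφ, haone j 0 (by simp)] using h1
    have h2 := hal 0 (Z - W) (Z - W) (k.sub_mem hZ hW) (k.sub_mem hZ hW)
    rw [map_sub, h0, sub_self, map_zero, eq_comm, div_eq_zero_iff] at h2
    exact sub_eq_zero.mp (hzero _ (h2.resolve_right (hcpos 0).ne'))
  · rintro i i' hii X Y ⟨hX, -⟩ ⟨hY, -⟩
    rw [hgb, neg_eq_zero]
    refine Finset.sum_eq_zero fun l _ => ?_
    by_cases hl : i = l
    · subst hl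
      rw [hπzero i' i hii.symm Y hY]; simp
    · rw [hπzero i l hl X hX]; simp
  · intro j j' hjj Z hZ W hW
    rcases lt_or_gt_of_ne hjj with h | h
    · exact o3lt j j' h Z hZ W hW
    · rw [hgbsymm]
      exact o3lt j' j h W hW Z hZ
  · rintro i Z hZ X ⟨hX, hXk⟩
    refine ⟨hKideal i Z X hX, fun W hW => ?_⟩
    rw [← lie_skew, map_neg, LinearMap.neg_apply, LieModule.traceForm_apply_lie_apply, hlie,
      hXk _ (k.lie_mem hZ hW), neg_zero]
  · intro X
    constructor
    · intro hX
      obtain ⟨f, w, Zk, hf, hw, hZk, rfl⟩ := hdecomp X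
      refine ⟨f, w, hf, hw, ?_⟩
      have h1 := hX Zk hZk
      simp only [map_add, map_sum, LinearMap.add_apply, LinearMap.sum_apply] at h1
      rw [Finset.sum_eq_zero fun i _ => o4 i (f i) (hf i) Zk hZk,
        Finset.sum_eq_zero fun j _ => o5 j (w j) (hw j) Zk hZk, zero_add, zero_add,
        hgbscal (fun _ => 1) (fun _ => 1) _ _ Zk Zk hZk hZk
          (fun l => (one_smul _ _).symm) (fun l => (one_smul _ _).symm)] at h1
      have hpos : 0 < ∑ l, z l / c l * (1 : ℝ) * 1 :=
        Finset.sum_pos (fun l _ => by simpa using div_pos (hz l) (hcpos l))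
          Finset.univ_nonempty
      have h2 : Zk = 0 := hzero Zk ((mul_eq_zero.mp h1).resolve_left (neg_ne_zero.mpr hpos.ne'))
      rw [h2, add_zero]
    · rintro ⟨f, w, hf, hw, rfl⟩ Z hZ
      simp only [map_add, map_sum, LinearMap.add_apply, LinearMap.sum_apply]
      rw [Finset.sum_eq_zero fun i _ => o4 i (f i) (hf i) Z hZ,
        Finset.sum_eq_zero fun j _ => o5 j (w j) (hw j) Z hZ, add_zero]
  · intro j Z hZ W hW
    rw [hgbscal (a j) (a j) _ _ Z W hZ hW (fun l => hπφ j l Z) (fun l => hπφ j l W), hsuma, hB]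
    have h1 : a j j.succ = A j := by simp [a]
    have h2 : ∀ l : Fin (m + 1), (if (l : ℕ) ≤ (j : ℕ) then z l / c l * a j l else 0)
        = if (l : ℕ) ≤ (j : ℕ) then z l / c l else 0 := by
      intro l
      split_ifs with hl
      · rw [haone j l hl, mul_one]
      · rfl
    simp only [h1, h2]
    ring
end
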